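/- Let f: ℕ → ℕ be computable. Then there is an increasing h: ℕ → ℕ such that: (i) h(n) ≥ f(n²) for every n ∈ ℕ; (ii) the map 1^n ↦ 1^{h(n)} is computable in time h(n)^{O(1)}; (iii) there is an L^r_ar-sentence φ_h such that for every x ∈ {0,1}* with |x| ≥ 2, S(x) ⊨ φ_h iff x = 1^{h(n)} for some n ∈ ℕ; (iv) there is an L^r_ar-formula φ(x) that defines the element n in S(1^{h(n)}) for every n ≥ 2. (Lemma 6.1) -/

import Mathlib

/-! # Framework: strings, pairing, Turing machines, circuits, complexity classes -/

namespace PFW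

/-- Binary strings `{0,1}*`. -/
abbrev Str := List Bool

/-- The string `1^n`. -/
def unary (n : ℕ) : Str := List.replicate n true

/-- The binary representation of a natural number, as a string. -/
def natStr (n : ℕ) : Str := Nat.bits n

/-- `num(x)`: the natural number whose binary expansion is `1x`. -/
def strNum (x : Str) : ℕ := x.foldl (fun a b => 2 * a + cond b 1 0) 1

/-- Duplicate every bit. -/
def dbl (x : Str) : Str := x.foldr (fun b r => b :: b :: r) []

/-- The pairing `⟨x,y⟩ = x₀x₀…x_{|x|-1}x_{|x|-1} 01 y₀y₀…y_{|y|-1}y_{|y|-1}`. -/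
def pairStr (x y : Str) : Str := dbl x ++ [false, true] ++ dbl y

/-- Inverse of bit duplication. -/
def undbl : Str → Option Str
  | [] => some []
  | [_] => none
  | a :: b :: r => if a = b then (undbl r).map (a :: ·) else none

/-- Parse a string of the form `⟨x,y⟩` into `(x, y)`. -/
def splitPair : Str → Option (Str × Str)
  | [] => none
  | [_] => none
  | a :: b :: r =>
    if a = b then (splitPair r).map (fun p => (a :: p.1, p.2))
    else if a = false then (undbl r).map (fun y => (([] : Str), y))
    else none

/-- The parameterization mapping a string of the form `⟨1^n, y⟩` to `|y|`
    and all other strings to `0`. -/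
def tallyFstParam (x : Str) : ℕ :=
  match splitPair x with
  | some (u, y) => if u.all (fun b => b) then y.length else 0
  | none => 0

/-! ## Turing machines (single tape, alphabet {0,1} plus blank) -/

/-- Head movements. -/
inductive Move where
  | L | R | S
deriving DecidableEq

def Move.apply : Move → ℤ → ℤ
  | .L, p => p - 1
  | .R, p => p + 1
  | .S, p => p

/-- A transition: in state `src` reading `read`, go to state `dst`,
    write `write` and move the head. -/
structure MTrans where
  src : ℕ
  read : Option Bool
  dst : ℕ
  write : Option Bool
  move : Move

/-- A nondeterministic Turing machine (start state `0`). -/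
structure NTM where
  states : ℕ
  accept : ℕ
  trans : List MTrans

/-- A configuration: state, head position and tape content. -/
structure Cfg where
  state : ℕ
  pos : ℤ
  tape : ℤ → Option Bool

/-- The tape holding input `x`. -/
def inputTape (x : Str) : ℤ → Option Bool :=
  fun i => if 0 ≤ i ∧ i < (x.length : ℤ) then x[i.toNat]? else none

/-- The start configuration on input `x`. -/
def initCfg (x : Str) : Cfg := ⟨0, 0, inputTape x⟩

/-- One computation step. -/
def NTM.Step (M : NTM) (c c' : Cfg) : Prop :=
  ∃ t ∈ M.trans, t.src = c.state ∧ t.read = c.tape c.pos ∧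
    c' = ⟨t.dst, t.move.apply c.pos, Function.update c.tape c.pos t.write⟩

/-- `f` is a run of length `n` of `M`. -/
def NTM.RunFrom (M : NTM) (f : ℕ → Cfg) (n : ℕ) : Prop := ∀ i < n, M.Step (f i) (f (i + 1))

/-- `M` accepts input `x` in exactly `n` steps. -/
def NTM.AcceptsExactly (M : NTM) (x : Str) (n : ℕ) : Prop :=
  ∃ f : ℕ → Cfg, f 0 = initCfg x ∧ M.RunFrom f n ∧ (f n).state = M.accept

/-- `M` accepts input `x` in at most `n` steps. -/
def NTM.AcceptsIn (M : NTM) (x : Str) (n : ℕ) : Prop := ∃ m ≤ n, M.AcceptsExactly x m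

/-- `M` is deterministic. -/
def NTM.Deterministic (M : NTM) : Prop := ∀ c c₁ c₂, M.Step c c₁ → M.Step c c₂ → c₁ = c₂

/-- Binary encoding of a machine. -/
def Move.code : Move → ℕ | .L => 0 | .R => 1 | .S => 2

def MTrans.code (t : MTrans) : ℕ :=
  Encodable.encode (t.src, t.read, t.dst, t.write, t.move.code)

def NTM.code (M : NTM) : Str :=
  natStr (Encodable.encode (M.states, M.accept, M.trans.map MTrans.code))

/-- `|M|`, the size of a machine. -/
def NTM.size (M : NTM) : ℕ := M.code.length

/-- A deterministic machine computes output `y` from input `x` in `t` steps: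
    it halts in the accepting state, head at position 0, with `y` on the tape. -/
def NTM.ComputesIn (M : NTM) (x y : Str) (t : ℕ) : Prop :=
  ∃ f : ℕ → Cfg, f 0 = initCfg x ∧ M.RunFrom f t ∧ (f t).state = M.accept ∧
    (f t).pos = 0 ∧ (f t).tape = inputTape y

/-- `F` is computable in polynomial time. -/
def PolyTimeFun (F : Str → Str) : Prop :=
  ∃ M : NTM, M.Deterministic ∧ ∃ c : ℕ,
    ∀ x : Str, ∃ t ≤ c * (x.length + 1) ^ c, M.ComputesIn x (F x) t

/-- A parameterization `κ : {0,1}* → ℕ` is polynomial time computable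
    (the value is produced in binary). -/
def PolyTimeParam (κ : Str → ℕ) : Prop := PolyTimeFun (fun x => natStr (κ x))

/-! ## Classical complexity classes -/

/-- `Q ∈ NP`. -/
def InNP (Q : Set Str) : Prop :=
  ∃ M : NTM, ∃ c : ℕ, ∀ x : Str, x ∈ Q ↔ M.AcceptsIn x (c * (x.length + 1) ^ c)

/-- `Q ∈ NE`: nondeterministic time `2^{O(n)}`. -/
def InNE (Q : Set Str) : Prop :=
  ∃ M : NTM, ∃ c : ℕ, ∀ x : Str, x ∈ Q ↔ M.AcceptsIn x (2 ^ (c * (x.length + 1)))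

/-- `Q ∈ E`: deterministic time `2^{O(n)}`. -/
def InE (Q : Set Str) : Prop :=
  ∃ M : NTM, M.Deterministic ∧ ∃ c : ℕ, ∀ x : Str, x ∈ Q ↔ M.AcceptsIn x (2 ^ (c * (x.length + 1)))

/-! ## Alternating machines and the linear time hierarchy -/

/-- An alternating Turing machine: a machine together with a labelling of the
    states as universal (`true`) or existential (`false`). -/
structure ATM where
  toNTM : NTM
  universal : ℕ → Bool

/-- `M.Acc t a c`: starting from configuration `c`, the alternating machine `M`
    accepts within `t` steps using at most `a` alternations. -/
def ATM.Acc (M : ATM) : ℕ → ℕ → Cfg → Prop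
  | 0, _, c => c.state = M.toNTM.accept
  | t + 1, a, c =>
    c.state = M.toNTM.accept ∨
      (if M.universal c.state then
        (∃ c', M.toNTM.Step c c') ∧
          ∀ c', M.toNTM.Step c c' →
            (if M.universal c'.state = M.universal c.state then ATM.Acc M t a c'
             else a ≠ 0 ∧ ATM.Acc M t (a - 1) c')
       else
        ∃ c', M.toNTM.Step c c' ∧
          (if M.universal c'.state = M.universal c.state then ATM.Acc M t a c'
           else a ≠ 0 ∧ ATM.Acc M t (a - 1) c'))

/-- `Q` is accepted by an alternating machine in linear time with
    at most `a` alternations. -/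
def InLINHBounded (a : ℕ) (Q : Set Str) : Prop :=
  ∃ M : ATM, ∃ c : ℕ, ∀ x : Str, x ∈ Q ↔ M.Acc (c * (x.length + 1)) a (initCfg x)

/-- `Q ∈ LINH`: the linear time hierarchy. -/
def InLINH (Q : Set Str) : Prop := ∃ a : ℕ, InLINHBounded a Q

/-! ## Space bounded machines (read-only input tape plus a work tape) -/

structure OTrans where
  src : ℕ
  readIn : Option Bool
  readWork : Option Bool
  dst : ℕ
  moveIn : Move
  writeWork : Option Bool
  moveWork : Move

/-- A (nondeterministic) machine with a read-only input tape and one work tape. -/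
structure OTM where
  states : ℕ
  accept : ℕ
  trans : List OTrans

structure OCfg where
  state : ℕ
  inPos : ℤ
  workPos : ℤ
  work : ℤ → Option Bool

def OTM.Step (M : OTM) (x : Str) (c c' : OCfg) : Prop :=
  ∃ t ∈ M.trans, t.src = c.state ∧ t.readIn = inputTape x c.inPos ∧
    t.readWork = c.work c.workPos ∧
    c' = ⟨t.dst, t.moveIn.apply c.inPos, t.moveWork.apply c.workPos,
          Function.update c.work c.workPos t.writeWork⟩

def OTM.initCfg : OCfg := ⟨0, 0, 0, fun _ => none⟩

/-- `M` accepts `x` using work space at most `s`. -/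
def OTM.AcceptsSpace (M : OTM) (x : Str) (s : ℕ) : Prop :=
  ∃ n : ℕ, ∃ f : ℕ → OCfg, f 0 = OTM.initCfg ∧ (∀ i < n, M.Step x (f i) (f (i + 1))) ∧
    (f n).state = M.accept ∧ ∀ i ≤ n, (f i).workPos.natAbs ≤ s

def OTM.Deterministic (M : OTM) : Prop :=
  ∀ x c c₁ c₂, M.Step x c c₁ → M.Step x c c₂ → c₁ = c₂

/-- `Q ∈ NLINSPACE`. -/
def InNLINSP (Q : Set Str) : Prop :=
  ∃ M : OTM, ∃ c : ℕ, ∀ x : Str, x ∈ Q ↔ M.AcceptsSpace x (c * (x.length + 1))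

/-- `Q ∈ LINSPACE`. -/
def InLINSP (Q : Set Str) : Prop :=
  ∃ M : OTM, M.Deterministic ∧ ∃ c : ℕ, ∀ x : Str, x ∈ Q ↔ M.AcceptsSpace x (c * (x.length + 1))

/-! ## Parameterized classes defined by machines -/

/-- `(Q,κ) ∈ para-NP`. -/
def InParaNP (Q : Set Str) (κ : Str → ℕ) : Prop :=
  PolyTimeParam κ ∧
  ∃ M : NTM, ∃ f : ℕ → ℕ, Computable f ∧ ∃ c : ℕ,
    ∀ x : Str, x ∈ Q ↔ M.AcceptsIn x (f (κ x) * (x.length + 1) ^ c)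

/-- `(Q,κ) ∈ FPT = para-P`. -/
def InFPT (Q : Set Str) (κ : Str → ℕ) : Prop :=
  PolyTimeParam κ ∧
  ∃ M : NTM, M.Deterministic ∧ ∃ f : ℕ → ℕ, Computable f ∧ ∃ c : ℕ,
    ∀ x : Str, x ∈ Q ↔ M.AcceptsIn x (f (κ x) * (x.length + 1) ^ c)

/-- `(Q,κ) ∈ para-NL`: nondeterministic space `f(κ(x)) + O(log |x|)`. -/
def InParaNL (Q : Set Str) (κ : Str → ℕ) : Prop :=
  PolyTimeParam κ ∧
  ∃ M : OTM, ∃ f : ℕ → ℕ, Computable f ∧ ∃ c : ℕ,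
    ∀ x : Str, x ∈ Q ↔ M.AcceptsSpace x (f (κ x) + c * (Nat.log 2 (x.length + 1) + 1))

/-- `(Q,κ) ∈ para-L`: deterministic space `f(κ(x)) + O(log |x|)`. -/
def InParaL (Q : Set Str) (κ : Str → ℕ) : Prop :=
  PolyTimeParam κ ∧
  ∃ M : OTM, M.Deterministic ∧ ∃ f : ℕ → ℕ, Computable f ∧ ∃ c : ℕ,
    ∀ x : Str, x ∈ Q ↔ M.AcceptsSpace x (f (κ x) + c * (Nat.log 2 (x.length + 1) + 1))

/-! ## Circuits -/

/-- A gate of a circuit: an input bit, a constant, or a `¬`, `∧`, `∨` gate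
    (with unbounded fan-in for `∧` and `∨`) whose arguments are
    references to previous gates. -/
inductive Gate where
  | input (i : ℕ)
  | const (b : Bool)
  | not (j : ℕ)
  | and (js : List ℕ)
  | or (js : List ℕ)

/-- A circuit is a list of gates, each one referring to earlier gates;
    its output is the value of the last gate. -/
structure Circuit where
  gates : List Gate

/-- Value of a gate, given the input string and the values of earlier gates. -/
def Gate.val (x : Str) (vs : List Bool) : Gate → Bool
  | .input i => x.getD i false
  | .const b => b
  | .not j => !(vs.getD j false)
  | .and js => js.all fun j => vs.getD j false
  | .or js => js.any fun j => vs.getD j false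

def Circuit.vals (C : Circuit) (x : Str) : List Bool :=
  C.gates.foldl (fun vs g => vs ++ [g.val x vs]) []

/-- Evaluate a circuit on an input string. -/
def Circuit.eval (C : Circuit) (x : Str) : Bool := (C.vals x).getLast?.getD false

/-- Depth contribution of a gate (as usual, negations do not count
    towards the depth). -/
def Gate.dep (ds : List ℕ) : Gate → ℕ
  | .input _ => 0
  | .const _ => 0
  | .not j => ds.getD j 0
  | .and js => (js.map fun j => ds.getD j 0).foldr max 0 + 1
  | .or js => (js.map fun j => ds.getD j 0).foldr max 0 + 1

/-- The depth of a circuit. -/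
def Circuit.depth (C : Circuit) : ℕ :=
  (C.gates.foldl (fun ds g => ds ++ [g.dep ds]) []).foldr max 0

def Gate.fanin : Gate → ℕ
  | .and js => js.length
  | .or js => js.length
  | .not _ => 1
  | _ => 0

/-- The size of a circuit: number of gates plus number of wires. -/
def Circuit.size (C : Circuit) : ℕ := C.gates.length + (C.gates.map Gate.fanin).sum

def Gate.code : Gate → ℕ
  | .input i => Nat.pair 0 i
  | .const b => Nat.pair 1 (cond b 1 0)
  | .not j => Nat.pair 2 j
  | .and js => Nat.pair 3 (Encodable.encode js)
  | .or js => Nat.pair 4 (Encodable.encode js)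

/-- The binary encoding of a circuit. -/
def Circuit.code (C : Circuit) : Str := natStr (Encodable.encode (C.gates.map Gate.code))

/-- The input `⟨n, 1^k, i, b⟩` (with `n` and `i` in binary) for the machine
    checking the encoding of the circuit family. -/
def uniInput2 (n k i : ℕ) (b : Bool) : Str :=
  pairStr (natStr n) (pairStr (unary k) (pairStr (natStr i) [b]))

/-- dlogtime-style uniformity of a parameterized circuit family: a deterministic
    Turing machine decides in time `g(k) + O(log n)` whether the `i`-th bit of
    the binary encoding of `C_{n,k}` is `b`. -/
def UniformFamily2 (C : ℕ → ℕ → Circuit) : Prop :=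
  ∃ M : NTM, M.Deterministic ∧ ∃ g : ℕ → ℕ, Computable g ∧ ∃ e : ℕ,
    ∀ n k i b, ((C n k).code[i]? = some b ↔
      M.AcceptsIn (uniInput2 n k i b) (g k + e * (Nat.log 2 (n + 1) + 1)))

/-- `(Q,κ) ∈ para-AC⁰`: a uniform family `(C_{n,k})` of circuits of constant
    depth and size `f(k)·n^{O(1)}` (`f` computable) deciding `Q`. -/
def InParaAC0 (Q : Set Str) (κ : Str → ℕ) : Prop :=
  PolyTimeParam κ ∧
  ∃ C : ℕ → ℕ → Circuit, ∃ f : ℕ → ℕ, Computable f ∧ ∃ c d : ℕ,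
    (∀ n k, (C n k).size ≤ f k * (n + 1) ^ c ∧ (C n k).depth ≤ d) ∧
    (∀ x : Str, x ∈ Q ↔ (C x.length (κ x)).eval x = true) ∧
    UniformFamily2 C

def uniInput1 (n i : ℕ) (b : Bool) : Str := pairStr (natStr n) (pairStr (natStr i) [b])

/-- dlogtime-style uniformity of a circuit family. -/
def UniformFamily1 (C : ℕ → Circuit) : Prop :=
  ∃ M : NTM, M.Deterministic ∧ ∃ e : ℕ,
    ∀ n i b, ((C n).code[i]? = some b ↔
      M.AcceptsIn (uniInput1 n i b) (e * (Nat.log 2 (n + 1) + 1)))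

/-- `Q ∈ AC⁰` (dlogtime uniform). -/
def InAC0 (Q : Set Str) : Prop :=
  ∃ C : ℕ → Circuit, ∃ c d : ℕ,
    (∀ n, (C n).size ≤ (n + 1) ^ c ∧ (C n).depth ≤ d) ∧
    (∀ x : Str, x ∈ Q ↔ (C x.length).eval x = true) ∧
    UniformFamily1 C

/-- `Q ∈ AC⁰_d`: dlogtime uniform polynomial size circuits of depth at most `d`. -/
def InAC0Depth (d : ℕ) (Q : Set Str) : Prop :=
  ∃ C : ℕ → Circuit, ∃ c : ℕ,
    (∀ n, (C n).size ≤ (n + 1) ^ c ∧ (C n).depth ≤ d) ∧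
    (∀ x : Str, x ∈ Q ↔ (C x.length).eval x = true) ∧
    UniformFamily1 C

/-! ## The parameterized halting problems -/

/-- `p-Halt`: instances `⟨1^n, M⟩`, question: does the nondeterministic machine
    `M` accept the empty input in at most `n` steps? -/
def pHaltQ : Set Str :=
  { z | ∃ (n : ℕ) (M : NTM), z = pairStr (unary n) M.code ∧ ∃ m ≤ n, M.AcceptsExactly [] m }

/-- `p-Halt₌`: instances `⟨1^n, M⟩`, question: does the nondeterministic machine
    `M` accept the empty input in exactly `n` steps? -/
def pHaltEqQ : Set Str :=
  { z | ∃ (n : ℕ) (M : NTM), z = pairStr (unary n) M.code ∧ M.AcceptsExactly [] n }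

/-- `p-DHalt`: as `p-Halt` but with deterministic machines. -/
def pDHaltQ : Set Str :=
  { z | ∃ (n : ℕ) (M : NTM), z = pairStr (unary n) M.code ∧ M.Deterministic ∧
        ∃ m ≤ n, M.AcceptsExactly [] m }

/-- The parameterization `⟨1^n, M⟩ ↦ |M|` of the halting problems. -/
def haltParam : Str → ℕ := tallyFstParam

/-- `(Q,κ)` is almost tally: instances have the form `⟨1^n, x⟩` with `|x|`
    effectively bounded in the parameter. -/
def AlmostTally (Q : Set Str) (κ : Str → ℕ) : Prop :=
  (∀ z ∈ Q, ∃ (n : ℕ) (x : Str), z = pairStr (unary n) x) ∧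
  ∃ f : ℕ → ℕ, Computable f ∧ ∀ (n : ℕ) (x : Str), x.length ≤ f (κ (pairStr (unary n) x))

end PFW

/-! # String structures, the language `L^r_ar ∪ {ONE}`, interpretations -/

namespace PFW

open FirstOrder

/-- Function symbols of `L^r_ar ∪ {ONE}`: the constants `0` and `1`. -/
inductive LOneFun : ℕ → Type
  | zero : LOneFun 0
  | one : LOneFun 0

/-- Relation symbols of `L^r_ar ∪ {ONE}`: the unary `ONE`, the binary `<` and
    the ternary graphs of `+` and `×`. -/
inductive LOneRel : ℕ → Type
  | one : LOneRel 1
  | lt : LOneRel 2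
  | add : LOneRel 3
  | mul : LOneRel 3

/-- The relational language `L^r_ar ∪ {ONE}` of string structures. -/
def LOne : FirstOrder.Language := ⟨LOneFun, LOneRel⟩

/-- The size of the universe of the string structure `S(x)` (we pad to `2` to
    keep the structure total; for `|x| ≥ 2` it is exactly `|x|`). -/
def strLen (x : Str) : ℕ := max x.length 2

theorem two_le_strLen (x : Str) : 2 ≤ strLen x := Nat.le_max_right _ _

/-- The string structure `S(x) = ([n], +^n, ×^n, 0, 1, <, ONE^x)`, `n = |x|`. -/
def strStructure (x : Str) : LOne.Structure (Fin (strLen x)) where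
  funMap := fun {n} f _ =>
    match f with
    | .zero => ⟨0, by have := two_le_strLen x; omega⟩
    | .one => ⟨1, by have := two_le_strLen x; omega⟩
  RelMap := fun {n} R v =>
    match R, v with
    | .one, v => x.getD (v 0).val false = true
    | .lt, v => (v 0).val < (v 1).val
    | .add, v => (v 0).val + (v 1).val = (v 2).val
    | .mul, v => (v 0).val * (v 1).val = (v 2).val

/-- `S(x) ⊨ φ`. -/
def strSat (x : Str) (φ : LOne.Sentence) : Prop :=
  letI := strStructure x
  FirstOrder.Language.Sentence.Realize (Fin (strLen x)) φ

/-- A first-order interpretation (of `L^r_ar ∪ {ONE}` in itself) of width `w`. -/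
structure Interp where
  w : ℕ
  uni : LOne.Formula (Fin w)
  addF : LOne.Formula (Fin w ⊕ Fin w ⊕ Fin w)
  mulF : LOne.Formula (Fin w ⊕ Fin w ⊕ Fin w)
  ltF : LOne.Formula (Fin w ⊕ Fin w)
  oneR : LOne.Formula (Fin w)
  zeroC : LOne.Formula (Fin w)
  oneC : LOne.Formula (Fin w)

/-- The universe defined by the interpretation `I` inside `S(x)`. -/
def Interp.Dom (I : Interp) (x : Str) : Type :=
  { a : Fin I.w → Fin (strLen x) //
      letI := strStructure x
      I.uni.Realize a }

/-- `I.Models x y` says that the interpreted structure `S(x)^I` is defined and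
    isomorphic to the string structure `S(y)`. -/
def Interp.Models (I : Interp) (x y : Str) : Prop :=
  letI := strStructure x
  ∃ e : I.Dom x ≃ Fin (strLen y),
    (∀ u v w : I.Dom x,
       I.addF.Realize (Sum.elim u.1 (Sum.elim v.1 w.1)) ↔
         (e u).val + (e v).val = (e w).val) ∧
    (∀ u v w : I.Dom x,
       I.mulF.Realize (Sum.elim u.1 (Sum.elim v.1 w.1)) ↔
         (e u).val * (e v).val = (e w).val) ∧
    (∀ u v : I.Dom x, I.ltF.Realize (Sum.elim u.1 v.1) ↔ (e u).val < (e v).val) ∧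
    (∀ u : I.Dom x, I.oneR.Realize u.1 ↔ y.getD (e u).val false = true) ∧
    (∀ u : I.Dom x, I.zeroC.Realize u.1 ↔ (e u).val = 0) ∧
    (∀ u : I.Dom x, I.oneC.Realize u.1 ↔ (e u).val = 1)

/-- `r` is `κ`-eventually definable: for some computable `h` and some
    interpretation `I`, `S(x)^I ≅ S(r(x))` whenever `|x| ≥ h(κ(x))`. -/
def EventuallyDefinable (κ : Str → ℕ) (r : Str → Str) : Prop :=
  ∃ h : ℕ → ℕ, Computable h ∧ ∃ I : Interp,
    ∀ x : Str, h (κ x) ≤ x.length → I.Models x (r x)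

/-- `r` is honest: `|r(x)| ≥ |x|^{Ω(1)}`. -/
def Honest (r : Str → Str) : Prop :=
  ∃ (c n₀ : ℕ), 0 < c ∧ ∀ x : Str, n₀ ≤ x.length → x.length ≤ (r x).length ^ c

/-- An eventually definable reduction from `(Q,κ)` to `(Q',κ')`: a reduction
    which is honest, parameterized, and `κ`-eventually definable. -/
def EDReduction (Q : Set Str) (κ : Str → ℕ) (Q' : Set Str) (κ' : Str → ℕ)
    (r : Str → Str) : Prop :=
  (∀ x : Str, x ∈ Q ↔ r x ∈ Q') ∧
  Honest r ∧
  (∃ f : ℕ → ℕ, Computable f ∧ ∀ x : Str, κ' (r x) ≤ f (κ x)) ∧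
  EventuallyDefinable κ r

/-- `(Q,κ)` is eventually definable: for some computable `h` and first-order
    sentence `φ` of `L^r_ar ∪ {ONE}`, for all `x` with `|x| ≥ h(κ(x))` (and
    `|x| ≥ 2`): `x ∈ Q ⟺ S(x) ⊨ φ`. -/
def EventuallyDefinableProblem (Q : Set Str) (κ : Str → ℕ) : Prop :=
  ∃ h : ℕ → ℕ, Computable h ∧ ∃ φ : LOne.Sentence,
    ∀ x : Str, 2 ≤ x.length → h (κ x) ≤ x.length → (x ∈ Q ↔ strSat x φ)

end PFW

/-!
The graph of a computable function is defined by a positive arithmetical formula with bounded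
universal quantifiers. Hence so is the statement "`f (a ^ 2)` is defined for all `a ≤ n`", as a
formula `φ` in `n`, in such a way that bounding the existential quantifiers by some `W` can make it
true only if `f (n ^ 2) < W`. If `μ n` is the least bound for which `φ` is true at `n`, then `μ` is
monotone and `h n = μ n + n + 2` dominates `f (n ^ 2)`.

Trying the bounds `0`, `1`, ... in turn finds `μ n` in a number of steps polynomial in `h n`, since
all numbers involved are at most `h n`. And truth of `φ` for a bound that is an element of a string
structure is a first-order property of that structure, so that `|x| = h n` is a first-order
definable relation between the element `n` of `S(x)` and the string `x`.
-/

namespace PFW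

/-! ### Arithmetical formulas with bounded universal quantifiers -/

/-- The environment in which the variable `0` has the value `a` and the variable `n + 1` has the
value that `n` has in `v`; it interprets the variable bound by a de Bruijn quantifier. -/
def scons {α : Type*} (a : α) (v : ℕ → α) : ℕ → α
  | 0 => a
  | n + 1 => v n

section scons

variable {α β : Type*} (a : α) (v : ℕ → α)

@[simp] theorem scons_zero : scons a v 0 = a := rfl

@[simp] theorem scons_succ (n : ℕ) : scons a v (n + 1) = v n := rfl

theorem apply_scons (f : α → β) (n : ℕ) :
    f (scons a v n) = scons (f a) (fun i => f (v i)) n := by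
  cases n <;> rfl

end scons

/-- Positive arithmetical formulas whose universal quantifiers are bounded by a variable (`ball`).
The syntax is de Bruijn: `ball` and `ex` bind the variable `0` of their body. The atoms `one`,
`add` and `mul` express `xᵢ = 1`, `xᵢ + xⱼ = xₗ` and `xᵢ * xⱼ = xₗ`. -/
inductive ArithFormula where
  | one (i : ℕ)
  | add (i j l : ℕ)
  | mul (i j l : ℕ)
  | and (φ ψ : ArithFormula)
  | or (φ ψ : ArithFormula)
  | ball (i : ℕ) (φ : ArithFormula)
  | ex (φ : ArithFormula)

namespace ArithFormula

/-- Truth of a formula when the existential quantifiers range over the numbers below `W`;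
`W = ⊤` gives truth in the natural numbers. -/
def Realize (W : ℕ∞) : ArithFormula → (ℕ → ℕ) → Prop
  | one i, v => v i = 1
  | add i j l, v => v i + v j = v l
  | mul i j l, v => v i * v j = v l
  | and φ ψ, v => φ.Realize W v ∧ ψ.Realize W v
  | or φ ψ, v => φ.Realize W v ∨ ψ.Realize W v
  | ball i φ, v => ∀ a < v i, φ.Realize W (scons a v)
  | ex φ, v => ∃ a : ℕ, a < W ∧ φ.Realize W (scons a v)

variable {φ : ArithFormula} {W W' : ℕ∞} {v : ℕ → ℕ}

theorem Realize.mono (hW : W ≤ W') (h : φ.Realize W v) : φ.Realize W' v := by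
  induction φ generalizing v with
  | one | add | mul => exact h
  | and φ ψ ihφ ihψ => exact h.imp ihφ ihψ
  | or φ ψ ihφ ihψ => exact h.imp ihφ ihψ
  | ball i φ ih => exact fun a ha => ih (h a ha)
  | ex φ ih => exact h.imp fun a => And.imp (fun ha => ha.trans_le hW) ih

theorem Realize.exists_nat (h : φ.Realize W v) : ∃ N : ℕ, φ.Realize N v := by
  induction φ generalizing v with
  | one | add | mul => exact ⟨0, h⟩
  | and φ ψ ihφ ihψ =>
    obtain ⟨N, hN⟩ := ihφ h.1
    obtain ⟨N', hN'⟩ := ihψ h.2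
    exact ⟨max N N', hN.mono (by simp), hN'.mono (by simp)⟩
  | or φ ψ ihφ ihψ =>
    exact h.elim (fun h => (ihφ h).imp fun _ => .inl) fun h => (ihψ h).imp fun _ => .inr
  | ball i φ ih =>
    choose! N hN using fun a ha => ih (h a ha)
    exact ⟨(Finset.range (v i)).sup N, fun a ha =>
      (hN a ha).mono (Nat.cast_le.2 (Finset.le_sup (f := N) (Finset.mem_range.2 ha)))⟩
  | ex φ ih =>
    obtain ⟨a, _, h⟩ := h
    obtain ⟨N, hN⟩ := ih h
    exact ⟨max N (a + 1), a, Nat.cast_lt.2 (by omega), hN.mono (by simp)⟩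

/-- Renaming of the free variables. -/
def subst : ArithFormula → (ℕ → ℕ) → ArithFormula
  | one i, σ => one (σ i)
  | add i j l, σ => add (σ i) (σ j) (σ l)
  | mul i j l, σ => mul (σ i) (σ j) (σ l)
  | and φ ψ, σ => and (φ.subst σ) (ψ.subst σ)
  | or φ ψ, σ => or (φ.subst σ) (ψ.subst σ)
  | ball i φ, σ => ball (σ i) (φ.subst (scons 0 fun n => σ n + 1))
  | ex φ, σ => ex (φ.subst (scons 0 fun n => σ n + 1))

@[simp] theorem realize_subst (σ : ℕ → ℕ) :
    (φ.subst σ).Realize W v ↔ φ.Realize W fun i => v (σ i) := by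
  induction φ generalizing σ v with
  | one | add | mul => rfl
  | and φ ψ ihφ ihψ => exact and_congr (ihφ _) (ihψ _)
  | or φ ψ ihφ ihψ => exact or_congr (ihφ _) (ihψ _)
  | ball i φ ih | ex φ ih =>
    simp only [subst, Realize, ih, apply_scons _ _ (scons _ v), scons_zero, scons_succ]

end ArithFormula

/-! ### Definability in the natural numbers -/

/-- A relation on environments is Σ-definable if some `ArithFormula` defines it in the natural
numbers. Relations of several arguments are represented by relations on the first few variables. -/
def SigmaDefinable (R : (ℕ → ℕ) → Prop) : Prop :=
  ∃ φ : ArithFormula, ∀ v, φ.Realize ⊤ v ↔ R v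

/-- A total function of environments is Σ-definable if its graph is; the variable `0` carries the
value of the function and its arguments are shifted by one. -/
def SigmaDefinableFun (t : (ℕ → ℕ) → ℕ) : Prop :=
  SigmaDefinable fun v => v 0 = t fun i => v (i + 1)

namespace SigmaDefinable

variable {R S : (ℕ → ℕ) → Prop} {t : (ℕ → ℕ) → ℕ}

theorem of_iff (hR : SigmaDefinable R) (h : ∀ v, R v ↔ S v) : SigmaDefinable S :=
  hR.imp fun _ hφ v => (hφ v).trans (h v)

theorem and (hR : SigmaDefinable R) (hS : SigmaDefinable S) :
    SigmaDefinable fun v => R v ∧ S v := by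
  obtain ⟨φ, hφ⟩ := hR
  obtain ⟨ψ, hψ⟩ := hS
  exact ⟨φ.and ψ, fun v => and_congr (hφ v) (hψ v)⟩

theorem or (hR : SigmaDefinable R) (hS : SigmaDefinable S) :
    SigmaDefinable fun v => R v ∨ S v := by
  obtain ⟨φ, hφ⟩ := hR
  obtain ⟨ψ, hψ⟩ := hS
  exact ⟨φ.or ψ, fun v => or_congr (hφ v) (hψ v)⟩

theorem subst (hR : SigmaDefinable R) (σ : ℕ → ℕ) : SigmaDefinable fun v => R fun i => v (σ i) := by
  obtain ⟨φ, hφ⟩ := hR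
  exact ⟨φ.subst σ, fun v => (φ.realize_subst σ).trans (hφ _)⟩

theorem ex {R : ℕ → (ℕ → ℕ) → Prop} (hR : SigmaDefinable fun v => R (v 0) fun i => v (i + 1)) :
    SigmaDefinable fun v => ∃ a, R a v := by
  obtain ⟨φ, hφ⟩ := hR
  exact ⟨φ.ex, fun v => exists_congr fun a => by simpa using hφ (scons a v)⟩

theorem bind {R : ℕ → (ℕ → ℕ) → Prop} (hR : SigmaDefinable fun v => R (v 0) fun i => v (i + 1))
    (ht : SigmaDefinableFun t) : SigmaDefinable fun v => R (t v) v :=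
  (ex (R := fun a v => a = t v ∧ R a v) (and ht hR)).of_iff fun v => by simp

theorem ball {R : ℕ → (ℕ → ℕ) → Prop} (hR : SigmaDefinable fun v => R (v 0) fun i => v (i + 1))
    (ht : SigmaDefinableFun t) : SigmaDefinable fun v => ∀ a < t v, R a v := by
  obtain ⟨φ, hφ⟩ := hR.subst (scons 0 fun n => n + 2)
  exact bind (R := fun b v => ∀ a < b, R a v)
    ⟨.ball 0 φ, fun v => forall₂_congr fun a _ => hφ (scons a v)⟩ ht

end SigmaDefinable

section

variable {t u : (ℕ → ℕ) → ℕ}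

theorem SigmaDefinableFun.comp_subst (ht : SigmaDefinableFun t) (σ : ℕ → ℕ) :
    SigmaDefinableFun fun v => t fun i => v (σ i) :=
  SigmaDefinable.subst ht (scons 0 fun n => σ n + 1)

theorem SigmaDefinable.comp₂ {R : ℕ → ℕ → Prop}
    (hR : SigmaDefinable fun v => R (v 0) (v 1)) (ht : SigmaDefinableFun t)
    (hu : SigmaDefinableFun u) : SigmaDefinable fun v => R (t v) (u v) :=
  .bind (R := fun a v => R a (u v))
    (.bind (R := fun b v => R (v 0) b) (hR.subst (scons 1 fun _ => 0)) (hu.comp_subst (· + 1))) ht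

end

namespace SigmaDefinableFun

variable {t u : (ℕ → ℕ) → ℕ}

theorem map₂ {F : ℕ → ℕ → ℕ} (hF : SigmaDefinable fun v => F (v 0) (v 1) = v 2)
    (ht : SigmaDefinableFun t) (hu : SigmaDefinableFun u) :
    SigmaDefinableFun fun v => F (t v) (u v) :=
  (SigmaDefinable.bind (R := fun a v => F a (u fun i => v (i + 1)) = v 0)
    (.bind (R := fun b v => F (v 0) b = v 1) (hF.subst (scons 1 (scons 0 fun _ => 2)))
      (hu.comp_subst (· + 2))) (ht.comp_subst (· + 1))).of_iff fun _ => eq_comm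

theorem zero : SigmaDefinableFun fun _ => 0 :=
  ⟨.add 0 0 0, fun v => by simp [ArithFormula.Realize]⟩

theorem one : SigmaDefinableFun fun _ => 1 :=
  ⟨.one 0, fun _ => Iff.rfl⟩

theorem add (ht : SigmaDefinableFun t) (hu : SigmaDefinableFun u) :
    SigmaDefinableFun fun v => t v + u v :=
  map₂ ⟨.add 0 1 2, fun _ => Iff.rfl⟩ ht hu

theorem mul (ht : SigmaDefinableFun t) (hu : SigmaDefinableFun u) :
    SigmaDefinableFun fun v => t v * u v :=
  map₂ ⟨.mul 0 1 2, fun _ => Iff.rfl⟩ ht hu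

-- There is no atom for equality: `x = y` is expressed as `∃ z, z = 0 ∧ y + z = x`.
theorem var (i : ℕ) : SigmaDefinableFun fun v => v i :=
  (SigmaDefinable.ex (R := fun a v => a = 0 ∧ v (i + 1) + a = v 0)
    (.and zero ⟨.add (i + 2) 0 1, fun _ => Iff.rfl⟩)).of_iff fun v => by simp [eq_comm]

end SigmaDefinableFun

section

variable {t u w : (ℕ → ℕ) → ℕ}

theorem SigmaDefinable.eq (ht : SigmaDefinableFun t) (hu : SigmaDefinableFun u) :
    SigmaDefinable fun v => t v = u v :=
  .comp₂ (R := fun a b => a = b) (SigmaDefinableFun.var 0) ht hu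

theorem SigmaDefinable.lt (ht : SigmaDefinableFun t) (hu : SigmaDefinableFun u) :
    SigmaDefinable fun v => t v < u v :=
  (SigmaDefinable.ex (R := fun a v => t v + a + 1 = u v)
    (.eq (((ht.comp_subst (· + 1)).add (.var 0)).add .one)
      (hu.comp_subst (· + 1)))).of_iff fun v => by
      rw [Nat.lt_iff_add_one_le, le_iff_exists_add]
      simp only [eq_comm (a := u v), add_right_comm]

theorem SigmaDefinableFun.pair (ht : SigmaDefinableFun t) (hu : SigmaDefinableFun u) :
    SigmaDefinableFun fun v => Nat.pair (t v) (u v) := by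
  refine .map₂ (SigmaDefinable.of_iff (R := fun v => (v 0 < v 1 ∧ v 2 = v 1 * v 1 + v 0) ∨
      (v 1 < v 0 + 1 ∧ v 2 = v 0 * v 0 + v 0 + v 1)) ?_ fun v => ?_) ht hu
  · exact ((SigmaDefinable.lt (.var 0) (.var 1)).and
        (.eq (.var 2) (.add (.mul (.var 1) (.var 1)) (.var 0)))).or
      ((SigmaDefinable.lt (.var 1) (.add (.var 0) .one)).and
        (.eq (.var 2) (.add (.add (.mul (.var 0) (.var 0)) (.var 0)) (.var 1))))
  · rw [Nat.pair]
    split_ifs <;> omega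

theorem SigmaDefinable.beta (ht : SigmaDefinableFun t) (hu : SigmaDefinableFun u)
    (hw : SigmaDefinableFun w) : SigmaDefinable fun v => Nat.beta (t v) (u v) = w v := by
  have hm : SigmaDefinableFun fun v => (u (fun i => v (i + 3)) + 1) * v 1 + 1 :=
    .add (.mul (.add (hu.comp_subst (· + 3)) .one) (.var 1)) .one
  have h : SigmaDefinable fun v => ∃ a b q, t v = Nat.pair a b ∧ w v < (u v + 1) * b + 1 ∧
      a = q * ((u v + 1) * b + 1) + w v :=
    .ex <| .ex <| .ex <|
      (SigmaDefinable.eq (ht.comp_subst (· + 3)) (.pair (.var 2) (.var 1))).and <|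
      (SigmaDefinable.lt (hw.comp_subst (· + 3)) hm).and <|
        .eq (.var 2) (.add (.mul (.var 0) hm) (hw.comp_subst (· + 3)))
  refine h.of_iff fun v => ⟨?_, fun h => ?_⟩
  · rintro ⟨a, b, q, h₁, h₂, h₃⟩
    simp only [Nat.beta, h₁, Nat.unpair_pair]
    rw [h₃, Nat.mul_add_mod', Nat.mod_eq_of_lt h₂]
  · refine ⟨(t v).unpair.1, (t v).unpair.2, _, (Nat.pair_unpair _).symm, ?_,
      (Nat.div_add_mod' _ _).symm.trans (congrArg _ h)⟩
    exact h ▸ Nat.mod_lt _ (Nat.succ_pos _)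

end

/-! ### Partial recursive functions have definable graphs -/

theorem exists_beta_eq (g : ℕ → ℕ) (n : ℕ) : ∃ s, ∀ i < n, Nat.beta s i = g i := by
  refine ⟨Nat.unbeta ((List.range n).map g), fun i hi => ?_⟩
  simpa using Nat.beta_unbeta_coe ((List.range n).map g) ⟨i, by simpa using hi⟩

theorem mem_rec_bind_iff_exists_seq {α : Type*} (p : Part α) (q : ℕ → α → Part α) (n : ℕ) (y : α) :
    y ∈ (n.rec p fun m IH => IH.bind (q m) : Part α) ↔
      ∃ e : ℕ → α, e 0 ∈ p ∧ (∀ m < n, e (m + 1) ∈ q m (e m)) ∧ e n = y := by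
  induction n generalizing y with
  | zero => exact ⟨fun hy => ⟨fun _ => y, hy, by simp, rfl⟩, fun ⟨_, h0, _, hy⟩ => hy ▸ h0⟩
  | succ n ih =>
    change y ∈ Part.bind _ (q n) ↔ _
    simp only [Part.mem_bind_iff, ih]
    constructor
    · rintro ⟨_, ⟨e, h0, hs, rfl⟩, hy⟩
      refine ⟨Function.update e (n + 1) y, by simpa using h0, fun m hm => ?_, by simp⟩
      rcases Nat.lt_succ_iff_lt_or_eq.1 hm with hm | rfl
      · simpa [show m ≠ n by omega, show m ≠ n + 1 by omega] using hs m hm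
      · simpa using hy
    · rintro ⟨e, h0, hs, rfl⟩
      exact ⟨e n, ⟨e, h0, fun m hm => hs m (by omega), rfl⟩, hs n (by omega)⟩

theorem mem_rec_bind_iff_exists_beta (p : Part ℕ) (q : ℕ → ℕ → Part ℕ) (n y : ℕ) :
    y ∈ (n.rec p fun m IH => IH.bind (q m) : Part ℕ) ↔
      ∃ s, Nat.beta s 0 ∈ p ∧ (∀ m < n, Nat.beta s (m + 1) ∈ q m (Nat.beta s m)) ∧
        Nat.beta s n = y := by
  rw [mem_rec_bind_iff_exists_seq]
  refine ⟨?_, fun ⟨s, h⟩ => ⟨Nat.beta s, h⟩⟩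
  rintro ⟨e, h0, hs, rfl⟩
  obtain ⟨s, he⟩ := exists_beta_eq e (n + 1)
  refine ⟨s, by rwa [he 0 (by omega)], fun m hm => ?_, he n (by omega)⟩
  rw [he _ (by omega), he _ (by omega)]
  exact hs m hm

/-- A partial function has a Σ-definable graph; in `v 1 ∈ f (v 0)` the argument comes first. -/
def SigmaDefinableGraph (f : ℕ →. ℕ) : Prop := SigmaDefinable fun v => v 1 ∈ f (v 0)

namespace SigmaDefinableGraph

variable {f g : ℕ →. ℕ}

theorem mem (hf : SigmaDefinableGraph f) {t u : (ℕ → ℕ) → ℕ} (ht : SigmaDefinableFun t)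
    (hu : SigmaDefinableFun u) : SigmaDefinable fun v => u v ∈ f (t v) :=
  SigmaDefinable.comp₂ (R := fun a b => b ∈ f a) hf ht hu

theorem left : SigmaDefinableGraph fun n => n.unpair.1 :=
  (SigmaDefinable.ex (R := fun b v => v 0 = Nat.pair (v 1) b)
    (.eq (.var 1) (.pair (.var 2) (.var 0)))).of_iff fun v =>
      ⟨fun ⟨b, h⟩ => by simp [h], fun h => ⟨(v 0).unpair.2, by simp_all⟩⟩

theorem right : SigmaDefinableGraph fun n => n.unpair.2 :=
  (SigmaDefinable.ex (R := fun a v => v 0 = Nat.pair a (v 1))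
    (.eq (.var 1) (.pair (.var 0) (.var 2)))).of_iff fun v =>
      ⟨fun ⟨a, h⟩ => by simp [h], fun h => ⟨(v 0).unpair.1, by simp_all⟩⟩

theorem pair (hf : SigmaDefinableGraph f) (hg : SigmaDefinableGraph g) :
    SigmaDefinableGraph fun n => Nat.pair <$> f n <*> g n :=
  (SigmaDefinable.ex (R := fun a v => ∃ b, a ∈ f (v 0) ∧ b ∈ g (v 0) ∧ v 1 = Nat.pair a b)
    (.ex (R := fun b v => v 0 ∈ f (v 1) ∧ b ∈ g (v 1) ∧ v 2 = Nat.pair (v 0) b)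
      ((hf.mem (.var 2) (.var 1)).and <| (hg.mem (.var 2) (.var 0)).and <|
        .eq (.var 3) (.pair (.var 1) (.var 0))))).of_iff fun v => by simp [Seq.seq, eq_comm]

theorem comp (hf : SigmaDefinableGraph f) (hg : SigmaDefinableGraph g) :
    SigmaDefinableGraph fun n => g n >>= f :=
  (SigmaDefinable.ex (R := fun b v => b ∈ g (v 0) ∧ v 1 ∈ f b)
    ((hg.mem (.var 1) (.var 0)).and (hf.mem (.var 0) (.var 2)))).of_iff fun _ =>
      Part.mem_bind_iff.symm

theorem prec (hf : SigmaDefinableGraph f) (hg : SigmaDefinableGraph g) :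
    SigmaDefinableGraph (Nat.unpaired fun a n =>
      n.rec (f a) fun m IH => do let i ← IH; g (Nat.pair a (Nat.pair m i))) := by
  have hinit : SigmaDefinable fun v => ∃ u, Nat.beta (v 0) 0 = u ∧ u ∈ f (v 2) :=
    .ex <| (SigmaDefinable.beta (.var 1) .zero (.var 0)).and (hf.mem (.var 3) (.var 0))
  have hstep : SigmaDefinable fun v => ∃ u w, Nat.beta (v 1) (v 0) = u ∧
      Nat.beta (v 1) (v 0 + 1) = w ∧ w ∈ g (Nat.pair (v 3) (Nat.pair (v 0) u)) :=
    .ex <| .ex <| (SigmaDefinable.beta (.var 3) (.var 2) (.var 1)).and <|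
      (SigmaDefinable.beta (.var 3) (.add (.var 2) .one) (.var 0)).and <|
        hg.mem (.pair (.var 5) (.pair (.var 2) (.var 1))) (.var 0)
  have h : SigmaDefinable fun v => ∃ a n s, v 0 = Nat.pair a n ∧
      (∃ u, Nat.beta s 0 = u ∧ u ∈ f a) ∧
      (∀ m < n, ∃ u w, Nat.beta s m = u ∧ Nat.beta s (m + 1) = w ∧
        w ∈ g (Nat.pair a (Nat.pair m u))) ∧ Nat.beta s n = v 1 :=
    .ex <| .ex <| .ex <| (SigmaDefinable.eq (.var 3) (.pair (.var 2) (.var 1))).and <|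
      hinit.and <| .and
        (.ball (R := fun m v => ∃ u w, Nat.beta (v 0) m = u ∧ Nat.beta (v 0) (m + 1) = w ∧
          w ∈ g (Nat.pair (v 2) (Nat.pair m u))) hstep (.var 1))
        (.beta (.var 0) (.var 1) (.var 4))
  refine h.of_iff fun v => Iff.trans ?_ (mem_rec_bind_iff_exists_beta _ _ _ _).symm
  constructor
  · rintro ⟨a, n, s, hv, h⟩
    exact ⟨s, by simpa [hv] using h⟩
  · rintro ⟨s, h0, hs, hn⟩
    exact ⟨_, _, s, (Nat.pair_unpair _).symm, ⟨_, rfl, h0⟩,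
      fun m hm => ⟨_, _, rfl, rfl, hs m hm⟩, hn⟩

theorem rfind (hf : SigmaDefinableGraph f) :
    SigmaDefinableGraph fun a => Nat.rfind fun n => (fun m => m = 0) <$> f (Nat.pair a n) := by
  have h : SigmaDefinable fun v => 0 ∈ f (Nat.pair (v 0) (v 1)) ∧
      ∀ m < v 1, ∃ z, z + 1 ∈ f (Nat.pair (v 0) m) :=
    (hf.mem (.pair (.var 0) (.var 1)) .zero).and <|
      .ball (R := fun m v => ∃ z, z + 1 ∈ f (Nat.pair (v 0) m))
        (.ex (hf.mem (.pair (.var 2) (.var 1)) (.add (.var 0) .one))) (.var 1)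
  refine h.of_iff fun v => Iff.trans ?_ Nat.mem_rfind.symm
  simp only [Part.map_eq_map, Part.mem_map_iff, decide_eq_true_eq, decide_eq_false_iff_not]
  refine and_congr (by simp) (forall₂_congr fun m _ => ?_)
  exact ⟨fun ⟨z, hz⟩ => ⟨z + 1, hz, by simp⟩,
    fun ⟨z, hz, h⟩ => ⟨z - 1, by rwa [Nat.sub_add_cancel (Nat.pos_of_ne_zero h)]⟩⟩

end SigmaDefinableGraph

theorem sigmaDefinableGraph_of_partrec {f : ℕ →. ℕ} (hf : Nat.Partrec f) :
    SigmaDefinableGraph f := by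
  induction hf with
  | zero => exact (SigmaDefinable.eq (.var 1) .zero).of_iff fun v => by simp [pure, PFun.pure]
  | succ => exact (SigmaDefinable.eq (.var 1) (.add (.var 0) .one)).of_iff fun v => by simp
  | left => exact .left
  | right => exact .right
  | pair _ _ hf hg => exact hf.pair hg
  | comp _ _ hf hg => exact hf.comp hg
  | prec _ _ hf hg => exact hf.prec hg
  | rfind _ hf => exact hf.rfind

namespace ArithFormula

/-- `∀ a ≤ n, ∃ y, ψ(y, a)`, where `n` is the variable `0`. -/
def forallLeEx (ψ : ArithFormula) : ArithFormula :=
  .ex (.and (.ex (.and (.one 0) (.add 2 0 1))) (.ball 0 (.ex (ψ.subst (scons 0 fun _ => 1)))))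

theorem realize_forallLeEx {ψ : ArithFormula} {W : ℕ∞} {n : ℕ} :
    ψ.forallLeEx.Realize W (fun _ => n) ↔
      (n + 1 : ℕ) < W ∧ ∀ a ≤ n, ∃ y : ℕ, y < W ∧ ψ.Realize W (scons y fun _ => a) := by
  have hone (h : ((n + 1 : ℕ) : ℕ∞) < W) : ((1 : ℕ) : ℕ∞) < W := h.trans_le' (by simp)
  have henv (y a b : ℕ) :
      (fun i => scons y (scons a (scons b fun _ => n)) (scons 0 (fun _ => 1) i)) =
        scons y fun _ => a := funext fun i => apply_scons _ _ (scons y _) i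
  simp only [forallLeEx, Realize, realize_subst, henv, scons_zero, scons_succ]
  constructor
  · rintro ⟨_, hn, ⟨_, -, rfl, rfl⟩, h⟩
    exact ⟨hn, fun a ha => h a (Nat.lt_succ_of_le ha)⟩
  · rintro ⟨hn, h⟩
    exact ⟨n + 1, hn, ⟨1, hone hn, rfl, rfl⟩, fun a ha => h a (Nat.le_of_lt_succ ha)⟩

end ArithFormula

theorem exists_dominating_formula {f : ℕ → ℕ} (hf : Computable f) :
    ∃ φ : ArithFormula, (∀ n, ∃ W : ℕ, φ.Realize W fun _ => n) ∧
      (∀ n (W : ℕ), (φ.Realize W fun _ => n) → f n < W) ∧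
      ∀ W, Antitone fun n => φ.Realize W fun _ => n := by
  obtain ⟨ψ, hψ⟩ := (sigmaDefinableGraph_of_partrec (Partrec.nat_iff.1 hf.partrec)).mem
    (.var 1) (.var 0)
  simp only [PFun.coe_val, Part.mem_some_iff] at hψ
  refine ⟨ψ.forallLeEx, fun n => ?_, fun n W h => ?_, fun W m n hmn h => ?_⟩
  · refine ArithFormula.Realize.exists_nat (W := ⊤) (ArithFormula.realize_forallLeEx.2 ?_)
    exact ⟨ENat.natCast_lt_top _, fun a _ => ⟨f a, ENat.natCast_lt_top _, (hψ _).2 rfl⟩⟩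
  · obtain ⟨y, hy, h⟩ := (ArithFormula.realize_forallLeEx.1 h).2 n le_rfl
    have hyf : y = f n := (hψ _).1 (h.mono le_top)
    exact hyf ▸ Nat.cast_lt.1 hy
  · obtain ⟨hn, h⟩ := ArithFormula.realize_forallLeEx.1 h
    exact ArithFormula.realize_forallLeEx.2
      ⟨hn.trans_le' (by gcongr), fun a ha => h a (ha.trans hmn)⟩

namespace ArithFormula

variable {φ : ArithFormula} {n : ℕ}

/-- The least bound on the quantifiers relative to which `φ` is true at `n`. It is meaningful only
if there is such a bound, and `0` otherwise. -/
noncomputable def leastBound (φ : ArithFormula) (n : ℕ) : ℕ :=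
  sInf {W : ℕ | φ.Realize W fun _ => n}

theorem isLeast_leastBound (h : ∃ W : ℕ, φ.Realize W fun _ => n) :
    IsLeast {W : ℕ | φ.Realize W fun _ => n} (φ.leastBound n) :=
  ⟨Nat.sInf_mem h, fun _ => Nat.sInf_le⟩

/-- The function `h` of the theorem: the least bound plus `n + 2`, so that `n` and the least bound
are elements of the structure `S(1^(h n))`. -/
noncomputable def stage (φ : ArithFormula) (n : ℕ) : ℕ := φ.leastBound n + n + 2

theorem two_le_stage (φ : ArithFormula) (n : ℕ) : 2 ≤ φ.stage n := Nat.le_add_left _ _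

theorem lt_stage (φ : ArithFormula) (n : ℕ) : n < φ.stage n := by rw [stage]; omega

theorem leastBound_lt_stage (φ : ArithFormula) (n : ℕ) : φ.leastBound n < φ.stage n := by
  rw [stage]; omega

theorem stage_strictMono (hφ : ∀ n, ∃ W : ℕ, φ.Realize W fun _ => n)
    (hanti : ∀ W, Antitone fun n => φ.Realize W fun _ => n) : StrictMono φ.stage := by
  intro m n hmn
  have := (isLeast_leastBound (hφ m)).2 (hanti _ hmn.le (isLeast_leastBound (hφ n)).1)
  rw [stage, stage]
  omega

end ArithFormula

/-! ### Definability in string structures -/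

section

open FirstOrder Language

/-- A relation on environments over the universes of string structures is definable if a single
first-order formula, with variables `ℕ`, defines it in every `S(x)`. -/
def StrDefinable (A : (x : Str) → (ℕ → Fin (strLen x)) → Prop) : Prop :=
  ∃ φ : LOne.Formula ℕ, ∀ x v, (letI := strStructure x; φ.Realize v) ↔ A x v

namespace StrDefinable

variable {A B : (x : Str) → (ℕ → Fin (strLen x)) → Prop}
  {C : (x : Str) → Fin (strLen x) → (ℕ → Fin (strLen x)) → Prop}

theorem of_iff (hA : StrDefinable A) (h : ∀ x v, A x v ↔ B x v) : StrDefinable B :=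
  hA.imp fun _ hφ x v => (hφ x v).trans (h x v)

theorem not (hA : StrDefinable A) : StrDefinable fun x v => ¬ A x v := by
  obtain ⟨φ, hφ⟩ := hA
  refine ⟨∼φ, fun x v => ?_⟩
  let := strStructure x
  exact Formula.realize_not.trans (not_congr (hφ x v))

theorem and (hA : StrDefinable A) (hB : StrDefinable B) :
    StrDefinable fun x v => A x v ∧ B x v := by
  obtain ⟨φ, hφ⟩ := hA
  obtain ⟨ψ, hψ⟩ := hB
  refine ⟨φ ⊓ ψ, fun x v => ?_⟩
  let := strStructure x
  exact Formula.realize_inf.trans (and_congr (hφ x v) (hψ x v))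

theorem or (hA : StrDefinable A) (hB : StrDefinable B) : StrDefinable fun x v => A x v ∨ B x v :=
  (hA.not.and hB.not).not.of_iff fun x v => by tauto

theorem imp (hA : StrDefinable A) (hB : StrDefinable B) : StrDefinable fun x v => A x v → B x v :=
  (hA.and hB.not).not.of_iff fun x v => by tauto

theorem ex (hC : StrDefinable fun x v => C x (v 0) fun i => v (i + 1)) :
    StrDefinable fun x v => ∃ a, C x a v := by
  obtain ⟨φ, hφ⟩ := hC
  refine ⟨(φ.relabel (scons (Sum.inr ()) Sum.inl)).iExs Unit, fun x v => ?_⟩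
  let := strStructure x
  have henv (i : Unit → Fin (strLen x)) :
      Sum.elim v i ∘ scons (Sum.inr ()) Sum.inl = scons (i ()) v := by
    funext n; cases n <;> rfl
  simp only [Formula.realize_iExs, Formula.realize_relabel, henv]
  exact ⟨fun ⟨i, hi⟩ => ⟨i (), (hφ x _).1 hi⟩, fun ⟨a, ha⟩ => ⟨fun _ => a, (hφ x (scons a v)).2 ha⟩⟩

theorem all (hC : StrDefinable fun x v => C x (v 0) fun i => v (i + 1)) :
    StrDefinable fun x v => ∀ a, C x a v :=
  (ex (C := fun x a v => ¬ C x a v) hC.not).not.of_iff fun x v => by simp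

theorem rel {n : ℕ} (R : LOne.Relations n) (ι : Fin n → ℕ) :
    StrDefinable fun x v => (strStructure x).RelMap R fun k => v (ι k) :=
  ⟨R.formula fun k => Term.var (ι k), fun x v => by
    let := strStructure x
    exact Formula.realize_rel⟩

theorem lt (i j : ℕ) : StrDefinable fun _ v => (v i : ℕ) < v j :=
  rel (n := 2) LOneRel.lt ![i, j]

theorem add (i j l : ℕ) : StrDefinable fun _ v => (v i : ℕ) + v j = v l :=
  rel (n := 3) LOneRel.add ![i, j, l]

theorem mul (i j l : ℕ) : StrDefinable fun _ v => (v i : ℕ) * v j = v l :=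
  rel (n := 3) LOneRel.mul ![i, j, l]

theorem bit (i : ℕ) : StrDefinable fun x v => x.getD (v i) false = true :=
  rel (n := 1) LOneRel.one ![i]

theorem one (i : ℕ) : StrDefinable fun _ v => (v i : ℕ) = 1 :=
  ⟨Term.equal (L := LOne) (Term.var i) (Constants.term (L := LOne) LOneFun.one), fun x v => by
    let := strStructure x
    exact Formula.realize_equal.trans Fin.ext_iff⟩

-- The bound `W` of `Realize` is itself an element of the structure, the value of the variable `w`.
theorem realize (φ : ArithFormula) (w : ℕ) (ρ : ℕ → ℕ) :
    StrDefinable fun _ v => φ.Realize (v w : ℕ) fun i => v (ρ i) := by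
  have hbody (φ : ArithFormula) (w : ℕ) (ρ : ℕ → ℕ)
      (ih : ∀ w ρ, StrDefinable fun _ v => φ.Realize (v w : ℕ) fun i => v (ρ i)) :
      StrDefinable fun _ v => φ.Realize (v (w + 1) : ℕ) (scons (v 0) fun i => v (ρ i + 1)) :=
    (ih (w + 1) (scons 0 fun n => ρ n + 1)).of_iff fun x v =>
      iff_of_eq (congrArg _ (funext fun i => apply_scons _ _ (fun j => (v j : ℕ)) i))
  induction φ generalizing w ρ with
  | one i => exact one _
  | add i j l => exact add _ _ _
  | mul i j l => exact mul _ _ _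
  | and φ ψ ihφ ihψ => exact (ihφ _ _).and (ihψ _ _)
  | or φ ψ ihφ ihψ => exact (ihφ _ _).or (ihψ _ _)
  | ball i φ ih =>
    refine (all (C := fun x a v => (a : ℕ) < v (ρ i) →
      φ.Realize (v w : ℕ) (scons a fun i => v (ρ i)))
      ((lt _ _).imp (hbody φ w ρ ih))).of_iff fun x v => ?_
    exact ⟨fun h a ha => h ⟨a, ha.trans (v (ρ i)).2⟩ ha, fun h a ha => h a ha⟩
  | ex φ ih =>
    refine (ex (C := fun x a v => (a : ℕ) < v w ∧
      φ.Realize (v w : ℕ) (scons a fun i => v (ρ i)))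
      ((lt _ _).and (hbody φ w ρ ih))).of_iff fun x v => ?_
    simp only [ArithFormula.Realize, Nat.cast_lt]
    exact ⟨fun ⟨a, h⟩ => ⟨a, h⟩, fun ⟨a, h⟩ => ⟨⟨a, h.1.trans (v w).2⟩, h⟩⟩

theorem isLast (i : ℕ) : StrDefinable fun x v => (v i : ℕ) + 1 = strLen x :=
  (ex (C := fun _ a v => (v i : ℕ) < a) (lt (i + 1) 0)).not.of_iff fun x v => by
    have hi := (v i).2
    refine ⟨fun h => ?_, fun h ⟨_, _⟩ => by omega⟩
    by_contra hne
    exact h ⟨⟨v i + 1, by omega⟩, Nat.lt_succ_self _⟩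

theorem isLeast_realize (φ : ArithFormula) (i j : ℕ) :
    StrDefinable fun _ v => IsLeast {W : ℕ | φ.Realize W fun _ => v i} (v j) :=
  ((realize φ j fun _ => i).and (all (C := fun _ a v => (a : ℕ) < v j →
    ¬ φ.Realize (a : ℕ) fun _ => v i)
      ((lt 0 (j + 1)).imp (realize φ 0 fun _ => i + 1).not))).of_iff fun x v => by
    refine and_congr_right fun _ => ⟨fun h W hW => ?_, fun h a ha hW => (h hW).not_gt ha⟩
    by_contra! hlt
    exact h ⟨W, hlt.trans (v j).2⟩ hlt hW

theorem strLen_eq_stage {φ : ArithFormula} (hφ : ∀ n, ∃ W : ℕ, φ.Realize W fun _ => n) :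
    StrDefinable fun x v => strLen x = φ.stage (v 0) := by
  have hμ (n : ℕ) := φ.isLeast_leastBound (hφ n)
  have h : StrDefinable fun x v => ∃ u last s w : Fin (strLen x), (u : ℕ) = 1 ∧
      (last + 1 : ℕ) = strLen x ∧ (w + v 0 : ℕ) = s ∧ (s + u : ℕ) = last ∧
        IsLeast {W : ℕ | φ.Realize W fun _ => v 0} w :=
    .ex <| .ex <| .ex <| .ex <| (one 3).and <| (isLast 2).and <| (add 0 4 1).and <|
      (add 1 3 2).and <| isLeast_realize φ 4 0
  refine h.of_iff fun x v => ?_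
  rw [ArithFormula.stage]
  refine ⟨?_, fun hx => ?_⟩
  · rintro ⟨u, last, s, w, hu, hlast, hs, hlast', hw⟩
    have := hw.unique (hμ _)
    omega
  · exact ⟨⟨1, by omega⟩, ⟨strLen x - 1, by omega⟩, ⟨strLen x - 2, by omega⟩,
      ⟨φ.leastBound (v 0), by omega⟩, rfl, by simp only; omega, by simp only; omega,
      by simp only; omega, hμ _⟩

theorem exists_sentence (hA : StrDefinable A) :
    ∃ φ : LOne.Sentence, ∀ x, strSat x φ ↔ ∃ a, A x fun _ => a := by
  obtain ⟨φ, hφ⟩ := hA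
  refine ⟨Formula.iExs (α := Empty) Unit (φ.relabel fun _ => Sum.inr ()), fun x => ?_⟩
  let := strStructure x
  simp only [strSat, Sentence.Realize, Formula.realize_iExs, Formula.realize_relabel]
  exact ⟨fun ⟨i, hi⟩ => ⟨i (), (hφ x _).1 hi⟩, fun ⟨a, ha⟩ => ⟨fun _ => a, (hφ x _).2 ha⟩⟩

theorem exists_formula (hA : StrDefinable A) :
    ∃ φ : LOne.Formula (Fin 1), ∀ x a,
      (letI := strStructure x; φ.Realize fun _ : Fin 1 => a) ↔ A x fun _ => a := by
  obtain ⟨φ, hφ⟩ := hA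
  refine ⟨φ.relabel fun _ => 0, fun x a => ?_⟩
  let := strStructure x
  exact Formula.realize_relabel.trans (hφ x _)

end StrDefinable

theorem strLen_unary {k : ℕ} (hk : 2 ≤ k) : strLen (unary k) = k := by
  simp [strLen, unary, hk]

theorem eq_unary_strLen_iff {x : Str} (hx : 2 ≤ x.length) :
    x = unary (strLen x) ↔ ∀ a : Fin (strLen x), x.getD a false = true := by
  have hxl : strLen x = x.length := max_eq_left hx
  rw [unary, List.eq_replicate_iff, List.forall_mem_iff_getElem]
  refine ⟨fun h a => ?_, fun h => ⟨hxl.symm, fun i hi => ?_⟩⟩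
  · rw [List.getD_eq_getElem _ _ (hxl ▸ a.2)]
    exact h.2 _ _
  · rw [← List.getD_eq_getElem _ false hi]
    exact h ⟨i, hxl ▸ hi⟩

theorem exists_sentence_iff_eq_unary {h : ℕ → ℕ}
    (hdef : StrDefinable fun x v => strLen x = h (v 0)) (hn : ∀ n, n < h n) (h2 : ∀ n, 2 ≤ h n) :
    ∃ φ : LOne.Sentence, ∀ x : Str, 2 ≤ x.length → (strSat x φ ↔ ∃ n, x = unary (h n)) := by
  obtain ⟨φ, hφ⟩ := (hdef.and (.all (C := fun x a _ => x.getD a false = true)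
    (.bit 0))).exists_sentence
  refine ⟨φ, fun x hx => (hφ x).trans ?_⟩
  simp only [← eq_unary_strLen_iff hx]
  constructor
  · rintro ⟨a, ha, hx1⟩
    exact ⟨a, ha ▸ hx1⟩
  · rintro ⟨n, rfl⟩
    have hlen := strLen_unary (h2 n)
    exact ⟨⟨n, hlen.symm ▸ hn n⟩, hlen, congrArg unary hlen.symm⟩

theorem exists_formula_iff_eq {h : ℕ → ℕ}
    (hdef : StrDefinable fun x v => strLen x = h (v 0)) (hinj : Function.Injective h)
    (h2 : ∀ n, 2 ≤ h n) :
    ∃ ψ : LOne.Formula (Fin 1), ∀ (n : ℕ) (a : Fin (strLen (unary (h n)))),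
      (letI := strStructure (unary (h n)); ψ.Realize fun _ : Fin 1 => a) ↔ (a : ℕ) = n := by
  obtain ⟨ψ, hψ⟩ := hdef.exists_formula
  exact ⟨ψ, fun n a => (hψ _ a).trans <|
    (strLen_unary (h2 n)).congr_left.trans <| eq_comm.trans hinj.eq_iff⟩

end

/-! ### Counter programs -/

/-- Programs for machines with counters: `ite i P Q` decrements counter `i` and runs `P` if the
counter is nonzero and runs `Q` otherwise; `loop i P` decrements counter `i` and runs `P` as long
as the counter is nonzero. -/
inductive Prog where
  | skip
  | inc (i : ℕ)
  | seq (P Q : Prog)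
  | ite (i : ℕ) (P Q : Prog)
  | loop (i : ℕ) (P : Prog)

/-- `Exec P s s' t`: the program `P`, started on the counter values `s`, terminates with the
counter values `s'` after at most `t` steps. -/
inductive Exec : Prog → (ℕ → ℕ) → (ℕ → ℕ) → ℕ → Prop
  | skip s : Exec .skip s s 0
  | inc i s : Exec (.inc i) s (Function.update s i (s i + 1)) 1
  | seq {P Q s s' s'' t t'} : Exec P s s' t → Exec Q s' s'' t' → Exec (.seq P Q) s s'' (t + t')
  | ite_zero {i P Q s s' t} : s i = 0 → Exec Q s s' t → Exec (.ite i P Q) s s' (t + 1)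
  | ite_pos {i P Q s s' t k} : s i = k + 1 → Exec P (Function.update s i k) s' t →
      Exec (.ite i P Q) s s' (t + 1)
  | loop_zero {i P s} : s i = 0 → Exec (.loop i P) s s 1
  | loop_pos {i P s s' s'' t t' k} : s i = k + 1 → Exec P (Function.update s i k) s' t →
      Exec (.loop i P) s' s'' t' → Exec (.loop i P) s s'' (t + t' + 1)
  | mono {P s s' t t'} : Exec P s s' t → t ≤ t' → Exec P s s' t'

/-- The truth value of a proposition, as the content of a counter. -/
noncomputable def truth (p : Prop) : ℕ := open Classical in if p then 1 else 0

theorem truth_of {p : Prop} (h : p) : truth p = 1 := if_pos h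

theorem truth_of_not {p : Prop} (h : ¬ p) : truth p = 0 := if_neg h

/-- The counter values `s` with those of the counters `d`, ..., `d + 3` replaced. -/
def block (s : ℕ → ℕ) (d a b c e : ℕ) : ℕ → ℕ := fun j =>
  if j = d then a else if j = d + 1 then b else if j = d + 2 then c else if j = d + 3 then e
  else s j

section block

open Function

variable (s : ℕ → ℕ) (d a b c e x : ℕ)

@[simp] theorem block_zero : block s d a b c e d = a := by simp [block]

@[simp] theorem block_one : block s d a b c e (d + 1) = b := by simp [block]

@[simp] theorem block_two : block s d a b c e (d + 2) = c := by simp [block]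

@[simp] theorem block_three : block s d a b c e (d + 3) = e := by simp [block]

theorem block_of_lt {j : ℕ} (hj : j < d) : block s d a b c e j = s j := by grind [block]

@[simp] theorem update_block_zero : update (block s d a b c e) d x = block s d x b c e := by
  grind [block, update_apply]

@[simp] theorem update_block_one : update (block s d a b c e) (d + 1) x = block s d a x c e := by
  grind [block, update_apply]

@[simp] theorem update_block_two : update (block s d a b c e) (d + 2) x = block s d a b x e := by
  grind [block, update_apply]

@[simp] theorem update_block_three :
    update (block s d a b c e) (d + 3) x = block s d a b c x := by
  grind [block, update_apply]

variable {s d}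

theorem block_eq_update (hs : ∀ j ≥ d, s j = 0) : block s d x 0 0 0 = update s d x := by
  grind [block, update_apply]

theorem block_eq_self (hs : ∀ j ≥ d, s j = 0) : block s d 0 0 0 0 = s := by
  grind [block]

end block

namespace Exec

open Function

variable {s s' s'' : ℕ → ℕ} {P : Prog}

theorem of_eq {t : ℕ} (h : Exec P s s'' t) (hs : s'' = s') : Exec P s s' t :=
  hs ▸ h

/-- In `S`, the argument is the number of iterations that remain. -/
theorem loop_iterate {i T : ℕ} (n : ℕ) (S : ℕ → ℕ → ℕ) (hS : ∀ k ≤ n, S k i = k)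
    (hP : ∀ k < n, Exec P (update (S (k + 1)) i k) (S k) T) :
    Exec (.loop i P) (S n) (S 0) (n * (T + 1) + 1) := by
  induction n with
  | zero => simpa using loop_zero (hS 0 le_rfl)
  | succ n ih =>
    have hn := ih (fun k hk => hS k (by omega)) fun k hk => hP k (by omega)
    refine (loop_pos (hS _ le_rfl) (hP n n.lt_succ_self) hn).mono ?_
    linarith

end Exec

namespace Prog

/-- Set counter `i` to zero. -/
def clear (i : ℕ) : Prog := loop i skip

/-- Negate the truth value in counter `i`. -/
def flip (i : ℕ) : Prog := ite i skip (inc i)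

/-- Clear counter `i`, which holds a truth value, after adding it to counter `j` as a
disjunction. -/
def orTo (i j : ℕ) : Prog := ite i (ite j (inc j) (inc j)) skip

/-- Add counter `i` to counter `j`, using the auxiliary counter `k`. -/
def copyAdd (i j k : ℕ) : Prog := seq (loop i (seq (inc j) (inc k))) (loop k (inc i))

/-- Subtract the numbers `x` and `y` in the counters `d + 1` and `d + 2` from each other: the
counters `d + 2` and `d + 3` receive the truncated differences `y - x` and `x - y`. -/
def diff (d : ℕ) : Prog := loop (d + 1) (ite (d + 2) skip (inc (d + 3)))

/-- Set counter `d` to the truth value of the equality of the counters `d + 1` and `d + 2`, which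
are cleared. -/
def eq (d : ℕ) : Prog :=
  seq (diff d) (ite (d + 3) (clear (d + 3)) (ite (d + 2) (clear (d + 2)) (inc d)))

/-- Set counter `d` to the truth value of the equality of the counters `d + 1` and `i`, of which the
former is cleared. -/
def eqVar (i d : ℕ) : Prog := seq (copyAdd i (d + 2) (d + 3)) (eq d)

/-- One iteration of `anyBelow`. -/
def anyStep (d : ℕ) (P : Prog) : Prog := seq P (seq (orTo (d + 3) d) (inc (d + 2)))

/-- Set counter `d` to the truth value of the statement that `P` returns a true value in counter
`d + 3` for some value of counter `d + 2` below the value of counter `i`. -/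
def anyBelow (i d : ℕ) (P : Prog) : Prog :=
  seq (copyAdd i (d + 1) (d + 3)) (seq (loop (d + 1) (anyStep d P)) (clear (d + 2)))

end Prog

namespace Exec

open Function

variable {s : ℕ → ℕ} {P : Prog} {p q : Prop} {d i j : ℕ}

theorem clear (i : ℕ) (s : ℕ → ℕ) : Exec (.clear i) s (update s i 0) (s i + 1) := by
  have := loop_iterate (P := .skip) (T := 0) (s i) (fun k => update s i k) (i := i) (by simp)
    fun k _ => by simpa using Exec.skip _
  simpa [Prog.clear] using this

theorem flip (h : s i = truth p) : Exec (.flip i) s (update s i (truth ¬ p)) 2 := by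
  by_cases hp : p
  · rw [truth_of hp] at h
    rw [truth_of_not (not_not.2 hp)]
    exact (ite_pos h (skip _)).mono (by omega)
  · rw [truth_of_not hp] at h
    rw [truth_of hp]
    exact ite_zero h ((inc i s).of_eq (by rw [h]))

theorem orTo (hij : i ≠ j) (hi : s i = truth p) (hj : s j = truth q) :
    Exec (.orTo i j) s (update (update s i 0) j (truth (q ∨ p))) 3 := by
  by_cases hp : p
  · rw [truth_of (.inr hp)]
    rw [truth_of hp] at hi
    refine ite_pos hi ?_
    by_cases hq : q
    · rw [truth_of hq] at hj
      exact ite_pos (by simpa [hij.symm] using hj) ((inc j _).of_eq (by simp))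
    · rw [truth_of_not hq] at hj
      exact ite_zero (by simpa [hij.symm] using hj) ((inc j _).of_eq (by simp [hij.symm, hj]))
  · rw [truth_of_not hp] at hi
    refine (ite_zero hi ((skip s).of_eq ?_)).mono (by omega)
    simp only [hp, or_false, ← hj, ← hi, update_eq_self]

theorem copyAdd {k : ℕ} (hij : i ≠ j) (hik : i ≠ k) (hjk : j ≠ k) (hk : s k = 0) :
    Exec (.copyAdd i j k) s (update s j (s j + s i)) (5 * s i + 2) := by
  let u (a b c : ℕ) := update (update (update s i a) j b) k c
  have out : Exec (.loop i (.seq (.inc j) (.inc k))) (u (s i) (s j) 0)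
      (u 0 (s j + s i) (s i)) (s i * 3 + 1) := by
    have := loop_iterate (P := .seq (.inc j) (.inc k)) (T := 2) (i := i) (s i)
      (fun m => u m (s j + (s i - m)) (s i - m)) (by simp [u, hij, hik])
      fun m hm => ((inc j _).seq (inc k _)).of_eq (by grind [update_apply])
    simpa using this
  have back : Exec (.loop k (.inc i)) (u 0 (s j + s i) (s i)) (u (s i) (s j + s i) 0)
      (s i * 2 + 1) := by
    have := loop_iterate (P := .inc i) (T := 1) (i := k) (s i)
      (fun m => u (s i - m) (s j + s i) m) (by simp [u])
      fun m hm => (inc i _).of_eq (by grind [update_apply])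
    simpa using this
  have hs : u (s i) (s j) 0 = s := by grind [update_apply]
  have hs' : u (s i) (s j + s i) 0 = update s j (s j + s i) := by grind [update_apply]
  rw [hs] at out
  exact ((out.seq back).mono (by omega)).of_eq hs'

section block

variable (s d) (a b c x y : ℕ)

theorem copyAdd_block_one (hi : i < d) : Exec (.copyAdd i (d + 1) (d + 3)) (block s d a b c 0)
    (block s d a (b + s i) c 0) (5 * s i + 2) := by
  simpa [block_of_lt _ _ _ _ _ _ hi] using
    copyAdd (i := i) (j := d + 1) (k := d + 3) (s := block s d a b c 0) (by omega) (by omega)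
      (by omega) (by simp)

theorem copyAdd_block_two (hi : i < d) : Exec (.copyAdd i (d + 2) (d + 3)) (block s d a b c 0)
    (block s d a b (c + s i) 0) (5 * s i + 2) := by
  simpa [block_of_lt _ _ _ _ _ _ hi] using
    copyAdd (i := i) (j := d + 2) (k := d + 3) (s := block s d a b c 0) (by omega) (by omega)
      (by omega) (by simp)

theorem diff : Exec (.diff d) (block s d a x y 0) (block s d a 0 (y - x) (x - y)) (3 * x + 1) := by
  have h := loop_iterate (P := .ite (d + 2) .skip (.inc (d + 3))) (T := 2) x
    (fun m => block s d a m (y - (x - m)) (x - m - y)) (i := d + 1) (by simp) fun m hm => ?_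
  · simpa [Prog.diff, mul_comm] using h
  · rcases hz : y - (x - (m + 1)) with _ | z
    · refine ite_zero (by simp) ((inc (d + 3) _).of_eq ?_)
      rw [update_block_one, block_three, update_block_three]
      congr 1 <;> omega
    · refine (ite_pos (k := z) (by simp) ((skip _).of_eq ?_)).mono (by omega)
      rw [update_block_one, update_block_two]
      congr 1 <;> omega

theorem eq : Exec (.eq d) (block s d 0 x y 0) (block s d (truth (x = y)) 0 0 0)
    (4 * x + y + 5) := by
  refine ((diff s d 0 x y).seq (t' := x + y + 4) ?_).mono (by omega)
  rcases hx : x - y with _ | z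
  · refine (ite_zero (by simp) (t := x + y + 3) ?_).mono (by omega)
    rcases hy : y - x with _ | z
    · rw [truth_of (by omega)]
      exact (ite_zero (by simp) ((inc d _).of_eq (by simp))).mono (by omega)
    · rw [truth_of_not (by omega)]
      exact (ite_pos (k := z) (by simp) ((clear (d + 2) _).of_eq (by simp))).mono
        (by simp; omega)
  · rw [truth_of_not (by omega)]
    exact (ite_pos (k := z) (by simp) ((clear (d + 3) _).of_eq
      (by simp [show y - x = 0 by omega]))).mono (by simp; omega)

theorem eqVar (hi : i < d) : Exec (.eqVar i d) (block s d 0 x 0 0)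
    (block s d (truth (x = s i)) 0 0 0) (4 * x + 6 * s i + 7) := by
  refine ((copyAdd_block_two s d 0 x 0 hi).seq ?_).mono (t := _ + (4 * x + s i + 5)) (by omega)
  rw [zero_add]
  exact eq s d x (s i)

theorem anyStep {T : ℕ}
    (hP : Exec P (block s d (truth q) y a 0) (block s d (truth q) y a (truth p)) T) :
    Exec (.anyStep d P) (block s d (truth q) y a 0) (block s d (truth (q ∨ p)) y (a + 1) 0)
      (T + 4) :=
  hP.seq ((orTo (p := p) (q := q) (by omega) (by simp) (by simp)).seq
    ((inc (d + 2) _).of_eq (by simp)))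

end block

theorem anyBelow (hi : i < d) (hs : ∀ j ≥ d, s j = 0) {T : ℕ} {p : ℕ → Prop}
    (hP : ∀ a < s i, ∀ x y,
      Exec P (block s d x y a 0) (block s d x y a (truth (p a))) T) :
    Exec (.anyBelow i d P) s (update s d (truth (∃ a < s i, p a)))
      ((T + 11) * (s i + 1)) := by
  have init := copyAdd_block_one s d 0 0 0 hi
  rw [block_eq_self hs, zero_add] at init
  have search : Exec (.loop (d + 1) (.anyStep d P)) (block s d 0 (s i) 0 0)
      (block s d (truth (∃ a < s i, p a)) 0 (s i) 0) (s i * (T + 5) + 1) := by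
    have h := loop_iterate (P := .anyStep d P) (T := T + 4) (s i)
      (fun m => block s d (truth (∃ a < s i - m, p a)) m (s i - m) 0) (i := d + 1) (by simp)
      fun m hm => ?_
    · simpa [truth_of_not] using h
    · rw [show s i - m = s i - (m + 1) + 1 by omega, Nat.exists_lt_succ_right, update_block_one]
      exact anyStep s d _ m (hP _ (by omega) _ m)
  have finish := clear (d + 2) (block s d (truth (∃ a < s i, p a)) 0 (s i) 0)
  rw [update_block_two, block_eq_update _ hs, block_two] at finish
  exact (init.seq (search.seq finish)).mono (by nlinarith)

end Exec

namespace ArithFormula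

open Function
open Polynomial hiding update

/-- A program that sets counter `d` to the truth value of a formula. The values of the free
variables are in the counters given by `ρ` and the bound on the existential quantifiers is in
counter `1`. -/
def eval : ArithFormula → (ℕ → ℕ) → ℕ → Prog
  | one i, ρ, d => .seq (.inc (d + 1)) (.eqVar (ρ i) d)
  | add i j l, ρ, d => .seq (.copyAdd (ρ i) (d + 1) (d + 3)) <|
      .seq (.copyAdd (ρ j) (d + 1) (d + 3)) (.eqVar (ρ l) d)
  | mul i j l, ρ, d => .seq (.copyAdd (ρ i) (d + 2) (d + 3)) <|
      .seq (.loop (d + 2) (.copyAdd (ρ j) (d + 1) (d + 3))) (.eqVar (ρ l) d)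
  | and φ ψ, ρ, d => .seq (φ.eval ρ d) (.ite d (ψ.eval ρ d) .skip)
  | or φ ψ, ρ, d => .seq (φ.eval ρ d) (.ite d (.inc d) (ψ.eval ρ d))
  | ball i φ, ρ, d => .seq
      (.anyBelow (ρ i) d (.seq (φ.eval (scons (d + 2) ρ) (d + 3)) (.flip (d + 3)))) (.flip d)
  | ex φ, ρ, d => .anyBelow 1 d (φ.eval (scons (d + 2) ρ) (d + 3))

/-- The counter values from which `φ.eval ρ d` is run: the counters from `d` on are available as
work space, and the bound on the quantifiers and the values of the variables are at most `B`. -/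
structure IsFrame (ρ : ℕ → ℕ) (d B : ℕ) (s : ℕ → ℕ) : Prop where
  one_lt : 1 < d
  lt (i : ℕ) : ρ i < d
  eq_zero : ∀ j ≥ d, s j = 0
  bound_le : s 1 ≤ B
  le (i : ℕ) : s (ρ i) ≤ B

namespace IsFrame

variable {ρ s : ℕ → ℕ} {d B : ℕ}

theorem block_apply_one (hs : IsFrame ρ d B s) (a b c e : ℕ) : block s d a b c e 1 = s 1 :=
  block_of_lt _ _ _ _ _ _ hs.one_lt

theorem block_apply_scons (hs : IsFrame ρ d B s) (x y a e i : ℕ) :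
    block s d x y a e (scons (d + 2) ρ i) = scons a (fun i => s (ρ i)) i := by
  cases i with
  | zero => exact block_two ..
  | succ i => exact block_of_lt _ _ _ _ _ _ (hs.lt i)

theorem push (hs : IsFrame ρ d B s) {a : ℕ} (ha : a ≤ B) (x y : ℕ) :
    IsFrame (scons (d + 2) ρ) (d + 3) B (block s d x y a 0) where
  one_lt := by omega
  lt
    | 0 => by simp
    | i + 1 => (hs.lt i).trans (by omega)
  eq_zero j hj := by
    have := hs.eq_zero j (by omega)
    grind [block]
  bound_le := by simpa only [hs.block_apply_one] using hs.bound_le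
  le
    | 0 => (hs.block_apply_scons x y a 0 0).trans_le ha
    | i + 1 => (hs.block_apply_scons x y a 0 (i + 1)).trans_le (hs.le i)

end IsFrame

/-- For numbers up to `B`, the evaluation of the formula is correct and takes at most `T` steps. -/
def EvaluatesIn (φ : ArithFormula) (B T : ℕ) : Prop :=
  ∀ ⦃ρ d s⦄, IsFrame ρ d B s →
    Exec (φ.eval ρ d) s (update s d (truth (φ.Realize (s 1 : ℕ) fun i => s (ρ i)))) T

namespace EvaluatesIn

variable {φ ψ : ArithFormula} {B T T' : ℕ}

theorem one (B i : ℕ) : (one i).EvaluatesIn B (6 * B + 12) := fun ρ d s hs => by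
  have init := Exec.inc (d + 1) (block s d 0 0 0 0)
  rw [update_block_one, block_one, block_eq_self hs.eq_zero] at init
  have test := Exec.eqVar s d 1 (hs.lt i)
  rw [block_eq_update _ hs.eq_zero] at test
  have := hs.le i
  simpa only [eval, Realize, zero_add, eq_comm] using (init.seq test).mono (by omega)

theorem add (B i j l : ℕ) : (add i j l).EvaluatesIn B (24 * B + 12) := fun ρ d s hs => by
  have copy := Exec.copyAdd_block_one s d 0 0 0 (hs.lt i)
  rw [block_eq_self hs.eq_zero, zero_add] at copy
  have sum := Exec.copyAdd_block_one s d 0 (s (ρ i)) 0 (hs.lt j)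
  have test := Exec.eqVar s d (s (ρ i) + s (ρ j)) (hs.lt l)
  rw [block_eq_update _ hs.eq_zero] at test
  have := hs.le i
  have := hs.le j
  have := hs.le l
  exact (copy.seq (sum.seq test)).mono (by omega)

theorem mul (B i j l : ℕ) : (mul i j l).EvaluatesIn B (9 * B ^ 2 + 14 * B + 12) :=
  fun ρ d s hs => by
    have copy := Exec.copyAdd_block_two s d 0 0 0 (hs.lt i)
    rw [block_eq_self hs.eq_zero, zero_add] at copy
    have prod : Exec (.loop (d + 2) (.copyAdd (ρ j) (d + 1) (d + 3)))
        (block s d 0 0 (s (ρ i)) 0) (block s d 0 (s (ρ i) * s (ρ j)) 0 0)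
        (s (ρ i) * (5 * s (ρ j) + 3) + 1) := by
      have h := Exec.loop_iterate (P := .copyAdd (ρ j) (d + 1) (d + 3)) (i := d + 2)
        (T := 5 * s (ρ j) + 2) (s (ρ i))
        (fun m => block s d 0 ((s (ρ i) - m) * s (ρ j)) m 0) (by simp) fun m hm => ?_
      · simpa using h
      · rw [show s (ρ i) - m = s (ρ i) - (m + 1) + 1 by omega, add_one_mul, update_block_two]
        exact Exec.copyAdd_block_one s d 0 _ m (hs.lt j)
    have test := Exec.eqVar s d (s (ρ i) * s (ρ j)) (hs.lt l)
    rw [block_eq_update _ hs.eq_zero] at test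
    have := hs.le i
    have := hs.le l
    have := Nat.mul_le_mul (hs.le i) (hs.le j)
    exact (copy.seq (prod.seq test)).mono (by nlinarith)

theorem and (hφ : φ.EvaluatesIn B T) (hψ : ψ.EvaluatesIn B T') :
    (and φ ψ).EvaluatesIn B (T + T' + 1) := fun ρ d s hs => by
  refine ((hφ hs).seq (t' := T' + 1) ?_).mono (by omega)
  have h0 := hs.eq_zero d le_rfl
  by_cases h : φ.Realize (s 1 : ℕ) fun i => s (ρ i)
  · exact .ite_pos (by simpa using truth_of h) (by simpa [Realize, h, ← h0] using hψ hs)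
  · refine (Exec.ite_zero (by simpa using truth_of_not h) ((Exec.skip _).of_eq ?_)).mono
      (by omega)
    simp [Realize, h]

theorem or (hφ : φ.EvaluatesIn B T) (hψ : ψ.EvaluatesIn B T') :
    (or φ ψ).EvaluatesIn B (T + T' + 2) := fun ρ d s hs => by
  refine ((hφ hs).seq (t' := T' + 2) ?_).mono (by omega)
  have h0 := hs.eq_zero d le_rfl
  by_cases h : φ.Realize (s 1 : ℕ) fun i => s (ρ i)
  · refine (Exec.ite_pos (by simpa using truth_of h) ((Exec.inc d _).of_eq ?_)).mono
      (by omega)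
    simp [Realize, h, truth]
  · have h' := truth_of_not h
    refine (Exec.ite_zero (by simpa using h') ?_).mono (Nat.le_succ (T' + 1))
    rw [h', ← h0, update_eq_self]
    simpa [Realize, h] using hψ hs

theorem exec_body (hφ : φ.EvaluatesIn B T) {ρ s : ℕ → ℕ} {d : ℕ} (hs : IsFrame ρ d B s) {a : ℕ}
    (ha : a ≤ B) (x y : ℕ) :
    Exec (φ.eval (scons (d + 2) ρ) (d + 3)) (block s d x y a 0)
      (block s d x y a (truth (φ.Realize (s 1 : ℕ) (scons a fun i => s (ρ i))))) T := by
  simpa only [hs.block_apply_one, hs.block_apply_scons, update_block_three]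
    using hφ (hs.push ha x y)

theorem ex (hφ : φ.EvaluatesIn B T) : (ex φ).EvaluatesIn B ((T + 11) * (B + 1)) :=
  fun ρ d s hs => by
    have h := Exec.anyBelow hs.one_lt hs.eq_zero fun a ha =>
      hφ.exec_body hs (ha.le.trans hs.bound_le)
    simpa only [eval, Realize, Nat.cast_lt] using h.mono (by gcongr; exact hs.bound_le)

theorem ball (i : ℕ) (hφ : φ.EvaluatesIn B T) :
    (ball i φ).EvaluatesIn B ((T + 13) * (B + 1) + 2) := fun ρ d s hs => by
  have body (a : ℕ) (ha : a < s (ρ i)) (x y : ℕ) :=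
    (hφ.exec_body hs (ha.le.trans (hs.le i)) x y).seq (Exec.flip (block_three ..))
  simp only [update_block_three] at body
  have h := (Exec.anyBelow (hs.lt i) hs.eq_zero body).seq (Exec.flip (update_self ..))
  have := hs.le i
  simpa [eval, Realize] using h.mono (t' := (T + 13) * (B + 1) + 2) (by gcongr)

end EvaluatesIn

/-- A bound on the number of steps of `eval`, as a polynomial in the bound on the numbers
involved. -/
noncomputable def evalTime : ArithFormula → ℕ[X]
  | one _ => 6 * X + 12
  | add _ _ _ => 24 * X + 12
  | mul _ _ _ => 9 * X ^ 2 + 14 * X + 12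
  | and φ ψ => φ.evalTime + ψ.evalTime + 1
  | or φ ψ => φ.evalTime + ψ.evalTime + 2
  | ball _ φ => (φ.evalTime + 13) * (X + 1) + 2
  | ex φ => (φ.evalTime + 11) * (X + 1)

theorem evaluatesIn_evalTime (φ : ArithFormula) (B : ℕ) :
    φ.EvaluatesIn B (φ.evalTime.eval B) := by
  induction φ with
  | one i => simpa [evalTime] using EvaluatesIn.one B i
  | add i j l => simpa [evalTime] using EvaluatesIn.add B i j l
  | mul i j l => simpa [evalTime] using EvaluatesIn.mul B i j l
  | and φ ψ ihφ ihψ => simpa [evalTime] using ihφ.and ihψ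
  | or φ ψ ihφ ihψ => simpa [evalTime] using ihφ.or ihψ
  | ball i φ ih => simpa [evalTime] using ih.ball i
  | ex φ ih => simpa [evalTime] using ih.ex

/-- Test the formula with the bound in counter `1` at the value of counter `0`; if it is false,
increment the bound and set counter `2` to one. -/
def searchStep (φ : ArithFormula) : Prog :=
  .seq (φ.eval (fun _ => 0) 3) (.ite 3 .skip (.seq (.inc 1) (.inc 2)))

/-- A program that replaces the value `n` of counter `0` by `φ.stage n`. -/
def stageProg (φ : ArithFormula) : Prog :=
  .seq (.inc 2) <| .seq (.loop 2 φ.searchStep) <|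
  .seq (.loop 1 (.inc 0)) (.seq (.inc 0) (.inc 0))

/-- A bound on the number of steps of `stageProg`, as a polynomial in its result. -/
noncomputable def stageTime (φ : ArithFormula) : ℕ[X] :=
  (X + 1) * (φ.evalTime + 5) + 2 * X + 5

section stageProg

variable {φ : ArithFormula} {B T n w : ℕ}

theorem EvaluatesIn.exec_eval (hφ : φ.EvaluatesIn B T) (hn : n ≤ B) (hw : w ≤ B) :
    Exec (φ.eval (fun _ => 0) 3) (block 0 0 n w 0 0)
      (block 0 0 n w 0 (truth (φ.Realize w fun _ => n))) T := by
  have hs : IsFrame (fun _ => 0) 3 B (block 0 0 n w 0 0) := {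
    one_lt := by omega
    lt _ := by omega
    eq_zero j hj := by
      have : (0 : ℕ → ℕ) j = 0 := rfl
      grind [block]
    bound_le := (block_one ..).trans_le hw
    le _ := (block_zero ..).trans_le hn }
  exact (hφ hs).of_eq (update_block_three ..)

theorem EvaluatesIn.searchStep_of_realize (hφ : φ.EvaluatesIn B T) (hn : n ≤ B) (hw : w ≤ B)
    (h : φ.Realize w fun _ => n) :
    Exec φ.searchStep (block 0 0 n w 0 0) (block 0 0 n w 0 0) (T + 1) := by
  have test := hφ.exec_eval hn hw
  rw [truth_of h] at test
  exact test.seq (.ite_pos (block_three ..) ((Exec.skip _).of_eq (update_block_three ..)))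

theorem EvaluatesIn.searchStep_of_not_realize (hφ : φ.EvaluatesIn B T) (hn : n ≤ B)
    (hw : w ≤ B) (h : ¬ φ.Realize w fun _ => n) :
    Exec φ.searchStep (block 0 0 n w 0 0) (block 0 0 n (w + 1) 1 0) (T + 3) := by
  have test := hφ.exec_eval hn hw
  rw [truth_of_not h] at test
  exact test.seq (.ite_zero (block_three ..) (((Exec.inc 1 _).of_eq (update_block_one ..)).seq
    ((Exec.inc 2 _).of_eq (update_block_two ..))))

theorem EvaluatesIn.exec_search (hφ : φ.EvaluatesIn B T) (hn : n ≤ B)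
    (hB : φ.leastBound n ≤ B) (h : ∃ W : ℕ, φ.Realize W fun _ => n) {k : ℕ}
    (hk : w + k = φ.leastBound n) :
    Exec (.loop 2 φ.searchStep) (block 0 0 n w 1 0) (block 0 0 n (φ.leastBound n) 0 0)
      ((k + 1) * (T + 5)) := by
  have start : update (block 0 0 n w 1 0) 2 0 = block 0 0 n w 0 0 := update_block_two ..
  induction k generalizing w with
  | zero =>
    obtain rfl : w = φ.leastBound n := hk
    have step := hφ.searchStep_of_realize hn hB (isLeast_leastBound h).1
    exact (Exec.loop_pos (block_two ..) (by rwa [start]) (.loop_zero (block_two ..))).mono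
      (by omega)
  | succ k ih =>
    have hw : ¬ φ.Realize w fun _ => n := fun hw => by
      have := (isLeast_leastBound h).2 hw
      omega
    have step := hφ.searchStep_of_not_realize hn (by omega) hw
    exact (Exec.loop_pos (block_two ..) (start ▸ step)
      (ih (by omega) (update_block_two ..))).mono (by linarith)

theorem exec_stageProg (h : ∃ W : ℕ, φ.Realize W fun _ => n) :
    Exec φ.stageProg (update 0 0 n) (update 0 0 (φ.stage n))
      (φ.stageTime.eval (φ.stage n)) := by
  have block_eq (m : ℕ) : block 0 0 m 0 0 0 = update (0 : ℕ → ℕ) 0 m :=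
    block_eq_update m fun _ _ => rfl
  have hn : n ≤ φ.stage n := (lt_stage φ n).le
  have hB : φ.leastBound n ≤ φ.stage n := (leastBound_lt_stage φ n).le
  have init : Exec (.inc 2) (update 0 0 n) (block 0 0 n 0 1 0) 1 :=
    block_eq n ▸ (Exec.inc 2 _).of_eq (update_block_two ..)
  have search := (φ.evaluatesIn_evalTime (φ.stage n)).exec_search hn hB h (zero_add _)
  have transfer : Exec (.loop 1 (.inc 0)) (block 0 0 n (φ.leastBound n) 0 0)
      (block 0 0 (n + φ.leastBound n) 0 0 0) (φ.leastBound n * 2 + 1) := by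
    have h := Exec.loop_iterate (P := .inc 0) (i := 1) (T := 1) (φ.leastBound n)
      (fun m => block 0 0 (n + (φ.leastBound n - m)) m 0 0) (fun m _ => block_one ..)
      fun m hm => (Exec.inc 0 _).of_eq (by grind [block, update_apply])
    simpa using h
  have final := (Exec.inc 0 (update 0 0 (n + φ.leastBound n))).seq (Exec.inc 0 _)
  rw [block_eq] at transfer
  refine ((init.seq (search.seq (transfer.seq final))).of_eq ?_).mono ?_
  · rw [update_idem, update_idem, update_self, update_self, stage]
    congr 1
    omega
  · have : (φ.leastBound n + 1) * (φ.evalTime.eval (φ.stage n) + 5) ≤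
        (φ.stage n + 1) * (φ.evalTime.eval (φ.stage n) + 5) := by gcongr
    have : φ.stageTime.eval (φ.stage n) =
        (φ.stage n + 1) * (φ.evalTime.eval (φ.stage n) + 5) + 2 * φ.stage n + 5 := by
      simp [stageTime]
    omega

end stageProg

end ArithFormula

/-! ### Compiling counter programs to machines -/

/-- The behaviour of a deterministic machine in one state: the next state, the symbol to write and
the head movement, depending on the symbol under the head. -/
abbrev Row := Option Bool → ℕ × Option Bool × Move

/-- The machine whose states are the positions in a list of rows, and one more state for
acceptance. -/
def machine (rows : List Row) : NTM where
  states := rows.length + 1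
  accept := rows.length
  trans := rows.zipIdx.flatMap fun p => [none, some false, some true].map fun a =>
    ⟨p.2, a, (p.1 a).1, (p.1 a).2.1, (p.1 a).2.2⟩

theorem machine_step_iff {rows : List Row} {c c' : Cfg} :
    (machine rows).Step c c' ↔ ∃ r, rows[c.state]? = some r ∧
      c' = ⟨(r (c.tape c.pos)).1, (r (c.tape c.pos)).2.2.apply c.pos,
        Function.update c.tape c.pos (r (c.tape c.pos)).2.1⟩ := by
  constructor
  · rintro ⟨t, ht, hsrc, hread, rfl⟩
    simp only [machine, List.mem_flatMap, List.mem_map] at ht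
    obtain ⟨⟨r, q⟩, hr, a, -, rfl⟩ := ht
    rw [List.mk_mem_zipIdx_iff_getElem?] at hr
    simp only at hsrc hread
    subst hsrc hread
    exact ⟨r, hr, rfl⟩
  · rintro ⟨r, hr, rfl⟩
    have mem_symbols (a : Option Bool) : a ∈ [none, some false, some true] := by
      rcases a with _ | _ | _ <;> simp
    exact ⟨_, List.mem_flatMap.2 ⟨(r, c.state), List.mk_mem_zipIdx_iff_getElem?.2 hr,
      List.mem_map.2 ⟨_, mem_symbols (c.tape c.pos), rfl⟩⟩, rfl, rfl, rfl⟩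

theorem machine_deterministic (rows : List Row) : (machine rows).Deterministic := by
  intro c c₁ c₂ h₁ h₂
  obtain ⟨r, hr, rfl⟩ := machine_step_iff.1 h₁
  obtain ⟨r', hr', rfl⟩ := machine_step_iff.1 h₂
  cases hr.symm.trans hr'
  rfl

/-- `ReachesIn M c c' t`: the machine `M` can get from `c` to `c'` in at most `t` steps. -/
inductive ReachesIn (M : NTM) : Cfg → Cfg → ℕ → Prop
  | refl c t : ReachesIn M c c t
  | step {c c' c'' t} : M.Step c c' → ReachesIn M c' c'' t → ReachesIn M c c'' (t + 1)

namespace ReachesIn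

variable {M : NTM} {c c' c'' : Cfg} {t t' : ℕ}

theorem mono (h : ReachesIn M c c' t) (ht : t ≤ t') : ReachesIn M c c' t' := by
  induction h generalizing t' with
  | refl c t => exact refl _ _
  | step hs _ ih =>
    obtain ⟨u, rfl⟩ := Nat.exists_eq_add_of_le' (Nat.one_le_of_lt ht)
    exact step hs (ih (by omega))

theorem trans (h : ReachesIn M c c' t) (h' : ReachesIn M c' c'' t') :
    ReachesIn M c c'' (t + t') := by
  induction h with
  | refl c t => exact h'.mono (by omega)
  | step hs _ ih => exact (step hs (ih h')).mono (by omega)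

theorem exists_runFrom (h : ReachesIn M c c' t) :
    ∃ t' ≤ t, ∃ f : ℕ → Cfg, f 0 = c ∧ M.RunFrom f t' ∧ f t' = c' := by
  induction h with
  | refl c t => exact ⟨0, Nat.zero_le _, fun _ => c, rfl, fun i hi => by omega, rfl⟩
  | @step c c' c'' t hs _ ih =>
    obtain ⟨t', ht', f, rfl, hf, hl⟩ := ih
    refine ⟨t' + 1, by omega, fun i => Nat.casesOn i c f, rfl, fun i hi => ?_, hl⟩
    cases i with
    | zero => exact hs
    | succ i => exact hf i (by omega)

end ReachesIn

theorem inputTape_natCast (x : List Bool) (k : ℕ) : inputTape x k = x[k]? := by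
  by_cases h : k < x.length <;> simp [inputTape, h]

theorem inputTape_of_neg (x : List Bool) {i : ℤ} (hi : i < 0) : inputTape x i = none :=
  if_neg fun h => by omega

theorem update_inputTape_eq {x y : List Bool} {k : ℕ} (h : ∀ j, j ≠ k → x[j]? = y[j]?) :
    Function.update (inputTape x) k y[k]? = inputTape y := by
  funext i
  rcases lt_or_ge i 0 with hi | hi
  · rw [Function.update_of_ne (by omega), inputTape_of_neg _ hi, inputTape_of_neg _ hi]
  · lift i to ℕ using hi
    obtain rfl | hik := eq_or_ne i k
    · rw [Function.update_self, inputTape_natCast]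
    · rw [Function.update_of_ne (by simpa using hik), inputTape_natCast, inputTape_natCast,
        h i hik]

theorem update_inputTape_append (x y : List Bool) (b : Bool) :
    Function.update (inputTape (x ++ y)) x.length (some b) = inputTape (x ++ b :: y.tail) := by
  have h := update_inputTape_eq (x := x ++ y) (y := x ++ b :: y.tail) (k := x.length)
    fun j hj => by grind
  simpa using h

theorem update_inputTape_erase (x : List Bool) (a : Option Bool) :
    Function.update (inputTape (x ++ a.toList)) x.length none = inputTape x := by
  have h := update_inputTape_eq (x := x ++ a.toList) (y := x) (k := x.length)
    fun j hj => by grind [Option.toList]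
  simpa using h

/-- The configuration with `L` reversed, followed by `R` on the tape, and the head on the first
symbol of `R`. -/
def zipCfg (q : ℕ) (L R : List Bool) : Cfg := ⟨q, L.length, inputTape (L.reverse ++ R)⟩

/-- The configuration with the head immediately to the left of position `k`. -/
def backCfg (q k : ℕ) (x : List Bool) : Cfg := ⟨q, (k : ℤ) - 1, inputTape x⟩

theorem backCfg_eq_zipCfg (q : ℕ) (L R : List Bool) (a : Bool) :
    backCfg q (L.length + 1) (L.reverse ++ a :: R) = zipCfg q L (a :: R) := by
  simp [backCfg, zipCfg]

theorem zipCfg_tape_pos (q : ℕ) (L R : List Bool) :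
    (zipCfg q L R).tape (zipCfg q L R).pos = R.head? := by
  simp [zipCfg, inputTape_natCast, List.getElem?_append_right, List.head?_eq_getElem?]

section Moves

variable {rows : List Row} {q q' : ℕ} {r : Row} {L R : List Bool}

theorem step_right {b : Bool} (hr : rows[q]? = some r) (h : r R.head? = (q', some b, .R)) :
    (machine rows).Step (zipCfg q L R) (zipCfg q' (b :: L) R.tail) := by
  refine machine_step_iff.2 ⟨r, hr, ?_⟩
  rw [zipCfg_tape_pos, h]
  have := update_inputTape_append L.reverse R b
  simp_all [zipCfg, Move.apply]

theorem step_left {b : Bool} (hr : rows[q]? = some r) (h : r R.head? = (q', some b, .L)) :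
    (machine rows).Step (zipCfg q L R)
      (backCfg q' L.length (L.reverse ++ b :: R.tail)) := by
  refine machine_step_iff.2 ⟨r, hr, ?_⟩
  rw [zipCfg_tape_pos, h]
  have := update_inputTape_append L.reverse R b
  simp_all [zipCfg, backCfg, Move.apply]

theorem step_erase_left {a : Option Bool} (hr : rows[q]? = some r) (h : r a = (q', none, .L)) :
    (machine rows).Step (zipCfg q L a.toList) (backCfg q' L.length L.reverse) := by
  refine machine_step_iff.2 ⟨r, hr, ?_⟩
  rw [zipCfg_tape_pos, Option.head?_toList, h]
  have := update_inputTape_erase L.reverse a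
  simp_all [zipCfg, backCfg, Move.apply]

theorem step_stay (hr : rows[q]? = some r) (h : ∀ a, r a = (q', a, .S)) :
    (machine rows).Step (zipCfg q L R) (zipCfg q' L R) := by
  refine machine_step_iff.2 ⟨r, hr, ?_⟩
  simp [zipCfg, h, Move.apply]

theorem step_home (hr : rows[q]? = some r) (h : r none = (q', none, .R)) (x : List Bool) :
    (machine rows).Step (backCfg q 0 x) (zipCfg q' [] x) := by
  refine machine_step_iff.2 ⟨r, hr, ?_⟩
  have h_blank : inputTape x (-1) = none := inputTape_of_neg x (by omega)
  simp only [zipCfg, backCfg, Nat.cast_zero, zero_sub, h_blank, h]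
  simp [Move.apply, ← h_blank]

theorem reachesIn_right {x : List Bool} (hr : rows[q]? = some r)
    (hx : ∀ a ∈ x, r (some a) = (q, some a, .R)) (L R : List Bool) :
    ReachesIn (machine rows) (zipCfg q L (x ++ R)) (zipCfg q (x.reverse ++ L) R) x.length := by
  induction x generalizing L with
  | nil => exact .refl _ _
  | cons a x ih =>
    rw [List.reverse_cons, List.append_assoc, List.singleton_append]
    exact .step (step_right hr (hx a List.mem_cons_self))
      (ih (fun b hb => hx b (List.mem_cons_of_mem a hb)) (a :: L))

theorem reachesIn_home {x : List Bool} {k : ℕ} (hr : rows[q]? = some r)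
    (h : r none = (q', none, .R)) (hx : ∀ a ∈ x, r (some a) = (q, some a, .L))
    (hk : k ≤ x.length) :
    ReachesIn (machine rows) (backCfg q k x) (zipCfg q' [] x) (k + 1) := by
  induction k with
  | zero => exact .step (step_home hr h x) (.refl _ _)
  | succ k ih =>
    have step := step_left (L := (x.take k).reverse) (R := x.drop k) (b := x[k]) hr (by
      rw [List.head?_drop, List.getElem?_eq_getElem]
      exact hx _ (List.getElem_mem _))
    have split : x.take k ++ x[k] :: x.drop (k + 1) = x := by simp
    rw [List.drop_eq_getElem_cons hk, ← backCfg_eq_zipCfg, List.tail_cons, List.reverse_reverse,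
      split, List.length_reverse, List.length_take_of_le (by omega)] at step
    exact .step step (ih (by omega))

end Moves

/-- The list of rows contains the given segment from position `o` on. -/
def HasRowsAt (rows : List Row) (o : ℕ) (seg : List Row) : Prop :=
  ∀ k r, seg[k]? = some r → rows[o + k]? = some r

theorem hasRowsAt_append {rows seg seg' : List Row} {o : ℕ} :
    HasRowsAt rows o (seg ++ seg') ↔
      HasRowsAt rows o seg ∧ HasRowsAt rows (o + seg.length) seg' := by
  refine ⟨fun h => ⟨fun k r hk => h k r ?_, fun k r hk => ?_⟩, fun ⟨h, h'⟩ k r hk => ?_⟩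
  · rwa [List.getElem?_append_left (List.getElem?_eq_some_iff.1 hk).1]
  · rw [add_assoc]
    exact h _ r (by rwa [List.getElem?_append_right (by omega), Nat.add_sub_cancel_left])
  · rcases lt_or_ge k seg.length with hlt | hge
    · exact h k r (by rwa [List.getElem?_append_left hlt] at hk)
    · have := h' (k - seg.length) r (by rwa [List.getElem?_append_right hge] at hk)
      rwa [add_assoc, Nat.add_sub_cancel' hge] at this

/-- Numbers in unary notation, each followed by the separator `false`. -/
def unaryBlocks (l : List ℕ) : List Bool := l.flatMap fun n => List.replicate n true ++ [false]

theorem unaryBlocks_cons (n : ℕ) (l : List ℕ) :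
    unaryBlocks (n :: l) = List.replicate n true ++ false :: unaryBlocks l := by
  simp [unaryBlocks]

theorem unaryBlocks_append (l l' : List ℕ) :
    unaryBlocks (l ++ l') = unaryBlocks l ++ unaryBlocks l' :=
  List.flatMap_append

theorem unaryBlocks_replicate_zero (k : ℕ) :
    unaryBlocks (List.replicate k 0) = List.replicate k false := by
  induction k with
  | zero => rfl
  | succ k ih => rw [List.replicate_succ, unaryBlocks_cons, ih]; rfl

/-- Rows that move the head to the right beyond `i` separators. -/
def seekRows (o i : ℕ) : List Row := (List.range i).map fun k a =>
  (if a = some false then o + k + 1 else o + k, a, .R)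

/-- The action of moving the head to the start of the tape. -/
def homeRow (q q' : ℕ) : Row
  | none => (q', none, .R)
  | some b => (q, some b, .L)

/-- The action of writing the symbol `b` and remembering the symbol that was read in the choice of
the state. -/
def carryRow (q : ℕ) (b : Bool) : Row
  | none => (q + 2, some b, .L)
  | some a => (q + (!a).toNat, some b, .R)

/-- Rows that insert a symbol at the head: `true` if started in state `q` and `false` if started in
state `q + 1`. -/
def insertRows (q : ℕ) : List Row := [carryRow q true, carryRow q false]

/-- Rows that delete the symbol to the left of the head. -/
def deleteRows (q : ℕ) : List Row :=
  [fun a => (a.elim (q + 4) fun b => q + 1 + b.toNat, a, .L),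
    fun _ => (q + 3, some false, .R),
    fun _ => (q + 3, some true, .R),
    fun a => (q, a, .R),
    fun _ => (q + 5, none, .L)]

/-- Rows that increment counter `i`. -/
def incRows (o i : ℕ) : List Row :=
  seekRows o i ++ (insertRows (o + i) ++ [homeRow (o + i + 2) (o + i + 3)])

/-- Rows that go to state `o + i + 8` after decrementing counter `i`, or to state `z` if the
counter is zero. -/
def decRows (o i z : ℕ) : List Row :=
  seekRows o i ++
    ([fun a => if a = some true then (o + i + 2, a, .R) else (o + i + 1, a, .L),
      homeRow (o + i + 1) z] ++ deleteRows (o + i + 2) ++ [homeRow (o + i + 7) (o + i + 8)])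

theorem length_seekRows (o i : ℕ) : (seekRows o i).length = i := by simp [seekRows]

theorem length_incRows (o i : ℕ) : (incRows o i).length = i + 3 := by
  simp [incRows, insertRows, length_seekRows]

theorem length_decRows (o i z : ℕ) : (decRows o i z).length = i + 8 := by
  simp [decRows, deleteRows, length_seekRows]

section Counters

variable {rows : List Row} {o q : ℕ}

theorem reachesIn_seek_add (l : List ℕ) {m k : ℕ} (hk : k + l.length ≤ m)
    (h : HasRowsAt rows o (seekRows o m)) (L R : List Bool) :
    ReachesIn (machine rows) (zipCfg (o + k) L (unaryBlocks l ++ R))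
      (zipCfg (o + k + l.length) ((unaryBlocks l).reverse ++ L) R) (unaryBlocks l).length := by
  induction l generalizing k L with
  | nil => exact .refl _ _
  | cons n l ih =>
    rw [List.length_cons] at hk
    have hrow := h k _ (by
      rw [seekRows, List.getElem?_map, List.getElem?_range (by omega)]; rfl)
    have ones := reachesIn_right (x := List.replicate n true) hrow
      (fun a ha => by simp [List.eq_of_mem_replicate ha]) L (false :: (unaryBlocks l ++ R))
    have rest := ih (k := k + 1) (by omega) (false :: ((List.replicate n true).reverse ++ L))
    have := ones.trans (.step (step_right (b := false) (q' := o + (k + 1)) hrow rfl) rest)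
    simpa [unaryBlocks_cons, add_assoc, add_comm 1] using this

theorem reachesIn_seek (l : List ℕ) (h : HasRowsAt rows o (seekRows o l.length)) (R : List Bool) :
    ReachesIn (machine rows) (zipCfg o [] (unaryBlocks l ++ R))
      (zipCfg (o + l.length) (unaryBlocks l).reverse R) (unaryBlocks l).length := by
  simpa using reachesIn_seek_add l (zero_add _).le h [] R

theorem reachesIn_homeRow {q' k : ℕ} {x : List Bool} (h : rows[q]? = some (homeRow q q'))
    (hk : k ≤ x.length) :
    ReachesIn (machine rows) (backCfg q k x) (zipCfg q' [] x) (k + 1) :=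
  reachesIn_home h rfl (fun _ _ => rfl) hk

theorem reachesIn_insert (h : HasRowsAt rows q (insertRows q)) (b : Bool) (L R : List Bool) :
    ReachesIn (machine rows) (zipCfg (q + (!b).toNat) L R)
      (backCfg (q + 2) (L.length + R.length) (L.reverse ++ b :: R)) (R.length + 1) := by
  have hrow (b : Bool) : rows[q + (!b).toNat]? = some (carryRow q b) :=
    h (!b).toNat _ (by cases b <;> rfl)
  induction R generalizing b L with
  | nil => exact .step (step_left (hrow b) rfl) (.refl _ _)
  | cons a R ih =>
    have := ih a (b :: L)
    rw [List.reverse_cons, List.append_assoc, List.length_cons, Nat.add_right_comm] at this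
    exact .step (step_right (hrow b) rfl) this

theorem reachesIn_delete (h : HasRowsAt rows q (deleteRows q)) (b : Bool) (L R : List Bool) :
    ReachesIn (machine rows) (zipCfg q (b :: L) R)
      (backCfg (q + 5) (L.length + R.length) (L.reverse ++ R)) (3 * R.length + 2) := by
  induction R generalizing L b with
  | nil =>
    have back := step_erase_left (a := none) (L := b :: L) (h 0 _ rfl) rfl
    rw [List.reverse_cons, List.length_cons, backCfg_eq_zipCfg] at back
    rw [List.append_nil]
    exact .step back (.step (step_erase_left (a := some b) (h 4 _ rfl) rfl) (.refl _ _))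
  | cons a R ih =>
    have back := step_left (q' := q + 1 + a.toNat) (b := a) (L := b :: L) (R := a :: R)
      (h 0 _ rfl) (by simp)
    rw [List.reverse_cons, List.length_cons, List.append_assoc, List.singleton_append,
      backCfg_eq_zipCfg] at back
    have write : (machine rows).Step (zipCfg (q + 1 + a.toNat) L (b :: a :: R))
        (zipCfg (q + 3) (a :: L) (a :: R)) := by
      cases a
      · exact step_right (h 1 _ rfl) rfl
      · exact step_right (h 2 _ rfl) rfl
    have skip := step_right (q' := q) (b := a) (L := a :: L) (R := a :: R) (h 3 _ rfl) rfl
    have rest := ih a (a :: L)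
    rw [List.reverse_cons, List.length_cons, List.append_assoc, List.singleton_append,
      Nat.add_right_comm] at rest
    exact .step back (.step write (.step skip rest))

theorem reachesIn_inc (l : List ℕ) (h : HasRowsAt rows o (incRows o l.length)) (R : List Bool) :
    ReachesIn (machine rows) (zipCfg o [] (unaryBlocks l ++ R))
      (zipCfg (o + (l.length + 3)) [] (unaryBlocks l ++ true :: R))
      (2 * (unaryBlocks l ++ R).length + 3) := by
  rw [incRows, hasRowsAt_append, length_seekRows, hasRowsAt_append] at h
  obtain ⟨hseek, hinsert, hhome⟩ := h
  have seek := reachesIn_seek l hseek R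
  have insert := reachesIn_insert hinsert true (unaryBlocks l).reverse R
  rw [List.length_reverse, List.reverse_reverse] at insert
  have home := reachesIn_homeRow (hhome 0 _ rfl) (x := unaryBlocks l ++ true :: R)
    (k := (unaryBlocks l).length + R.length) (by simp)
  exact ((seek.trans insert).trans home).mono (by rw [List.length_append]; omega)

theorem reachesIn_dec_zero {z : ℕ} (l : List ℕ) (h : HasRowsAt rows o (decRows o l.length z))
    (R : List Bool) :
    ReachesIn (machine rows) (zipCfg o [] (unaryBlocks l ++ false :: R))
      (zipCfg z [] (unaryBlocks l ++ false :: R))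
      (2 * (unaryBlocks l ++ false :: R).length + 2) := by
  simp only [decRows, hasRowsAt_append, length_seekRows] at h
  obtain ⟨hseek, ⟨htest, -⟩, -⟩ := h
  have seek := reachesIn_seek l hseek (false :: R)
  have test := step_left (b := false) (L := (unaryBlocks l).reverse) (R := false :: R)
    (htest 0 _ rfl) rfl
  rw [List.length_reverse, List.reverse_reverse] at test
  have home := reachesIn_homeRow (htest 1 _ rfl) (x := unaryBlocks l ++ false :: R)
    (k := (unaryBlocks l).length) (by simp)
  exact (seek.trans (.step test home)).mono (by rw [List.length_append]; omega)

theorem reachesIn_dec_pos {z : ℕ} (l : List ℕ) (h : HasRowsAt rows o (decRows o l.length z))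
    (R : List Bool) :
    ReachesIn (machine rows) (zipCfg o [] (unaryBlocks l ++ true :: R))
      (zipCfg (o + (l.length + 8)) [] (unaryBlocks l ++ R))
      (5 * (unaryBlocks l ++ true :: R).length + 4) := by
  simp only [decRows, hasRowsAt_append, length_seekRows] at h
  obtain ⟨hseek, ⟨htest, hdelete⟩, hhome⟩ := h
  have seek := reachesIn_seek l hseek (true :: R)
  have test := step_right (b := true) (L := (unaryBlocks l).reverse) (R := true :: R)
    (htest 0 _ rfl) rfl
  have delete := reachesIn_delete hdelete true (unaryBlocks l).reverse R
  rw [List.length_reverse, List.reverse_reverse] at delete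
  have home := reachesIn_homeRow (hhome 0 _ rfl) (x := unaryBlocks l ++ R)
    (k := (unaryBlocks l).length + R.length) (by simp)
  exact (seek.trans (.step test (delete.trans home))).mono (by
    rw [List.length_append, List.length_cons]; omega)

end Counters

/-- The action of changing the state only. -/
def jumpRow (q : ℕ) : Row := fun a => (q, a, .S)

namespace Prog

/-- A bound on the indices of the counters of a program. -/
def width : Prog → ℕ
  | skip => 0
  | inc i => i + 1
  | seq P Q => max P.width Q.width
  | ite i P Q => max (i + 1) (max P.width Q.width)
  | loop i P => max (i + 1) P.width

/-- The number of rows of the compiled program. -/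
def size : Prog → ℕ
  | skip => 0
  | inc i => i + 3
  | seq P Q => P.size + Q.size
  | ite i P Q => i + 8 + P.size + 1 + Q.size
  | loop i P => i + 8 + P.size + 1

/-- The rows that simulate a program from state `o` on, leaving it in state `o + P.size`. -/
def compile : Prog → ℕ → List Row
  | skip, _ => []
  | inc i, o => incRows o i
  | seq P Q, o => P.compile o ++ Q.compile (o + P.size)
  | ite i P Q, o => decRows o i (o + (i + 8 + P.size + 1)) ++ P.compile (o + (i + 8)) ++
      [jumpRow (o + (i + 8 + P.size + 1 + Q.size))] ++ Q.compile (o + (i + 8 + P.size + 1))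
  | loop i P, o => decRows o i (o + (i + 8 + P.size + 1)) ++ P.compile (o + (i + 8)) ++ [jumpRow o]

theorem length_compile (P : Prog) (o : ℕ) : (P.compile o).length = P.size := by
  induction P generalizing o with
  | skip => rfl
  | inc i => exact length_incRows o i
  | seq P Q ihP ihQ => simp [compile, size, ihP, ihQ]
  | ite i P Q ihP ihQ => simp [compile, size, length_decRows, ihP, ihQ, add_assoc, add_comm 1]
  | loop i P ih => simp [compile, size, length_decRows, ih, add_assoc]

end Prog

/-- The tape contents representing the counters below `K`. -/
def storeTape (K : ℕ) (s : ℕ → ℕ) : List Bool := unaryBlocks ((List.range K).map s)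

/-- The configuration in state `q` with the counters `s` on the tape. -/
def storeCfg (K q : ℕ) (s : ℕ → ℕ) : Cfg := zipCfg q [] (storeTape K s)

section Store

variable {rows : List Row} {i K o q : ℕ} {s s' : ℕ → ℕ}

theorem storeTape_update (hi : i < K) (s : ℕ → ℕ) (v : ℕ) :
    storeTape K (Function.update s i v) = unaryBlocks (((List.range K).map s).take i) ++
      (List.replicate v true ++ false :: unaryBlocks (((List.range K).map s).drop (i + 1))) := by
  have map_update : (List.range K).map (Function.update s i v) =
      ((List.range K).map s).set i v :=
    List.ext_getElem (by simp) fun j _ _ => by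
      simp [Function.update_apply, List.getElem_set, eq_comm]
  rw [storeTape, map_update, List.set_eq_take_append_cons_drop, if_pos (by simpa),
    unaryBlocks_append, unaryBlocks_cons]

theorem storeTape_eq (hi : i < K) (s : ℕ → ℕ) :
    storeTape K s = unaryBlocks (((List.range K).map s).take i) ++
      (List.replicate (s i) true ++ false ::
        unaryBlocks (((List.range K).map s).drop (i + 1))) := by
  simpa only [Function.update_eq_self] using storeTape_update hi s (s i)

theorem length_storeTape_update (hi : i < K) (s : ℕ → ℕ) (v : ℕ) :
    (storeTape K (Function.update s i v)).length + s i = (storeTape K s).length + v := by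
  rw [storeTape_update hi, storeTape_eq hi s]
  simp only [List.length_append, List.length_replicate]
  omega

theorem length_take_range_map (hi : i < K) (s : ℕ → ℕ) :
    (((List.range K).map s).take i).length = i := by
  simpa using hi.le

theorem storeTape_update_zero (K n : ℕ) : storeTape (K + 1) (Function.update 0 0 n) =
    List.replicate n true ++ List.replicate (K + 1) false := by
  have drop_zero : ((List.range (K + 1)).map (0 : ℕ → ℕ)).drop 1 = List.replicate K 0 := by
    simp [List.range_succ_eq_map, List.eq_replicate_iff]
  rw [storeTape_update K.succ_pos, zero_add, drop_zero, unaryBlocks_replicate_zero]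
  rfl

theorem reachesIn_storeCfg_inc (h : HasRowsAt rows o (incRows o i)) (hi : i < K) (s : ℕ → ℕ) :
    ReachesIn (machine rows) (storeCfg K o s)
      (storeCfg K (o + (i + 3)) (Function.update s i (s i + 1)))
      (2 * (storeTape K s).length + 3) := by
  have inc := reachesIn_inc _ ((length_take_range_map hi s).symm ▸ h)
    (List.replicate (s i) true ++ false :: unaryBlocks (((List.range K).map s).drop (i + 1)))
  rwa [length_take_range_map hi, ← storeTape_eq hi, ← List.cons_append, ← List.replicate_succ,
    ← storeTape_update hi] at inc

theorem reachesIn_storeCfg_dec_zero {z : ℕ} (h : HasRowsAt rows o (decRows o i z)) (hi : i < K)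
    (hs : s i = 0) :
    ReachesIn (machine rows) (storeCfg K o s) (storeCfg K z s)
      (2 * (storeTape K s).length + 2) := by
  have dec := reachesIn_dec_zero _ ((length_take_range_map hi s).symm ▸ h)
    (unaryBlocks (((List.range K).map s).drop (i + 1)))
  have tape := storeTape_eq hi s
  rw [hs, List.replicate_zero, List.nil_append] at tape
  rwa [← tape] at dec

theorem reachesIn_storeCfg_dec_pos {k z : ℕ} (h : HasRowsAt rows o (decRows o i z)) (hi : i < K)
    (hs : s i = k + 1) :
    ReachesIn (machine rows) (storeCfg K o s)
      (storeCfg K (o + (i + 8)) (Function.update s i k)) (5 * (storeTape K s).length + 4) := by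
  have dec := reachesIn_dec_pos _ ((length_take_range_map hi s).symm ▸ h)
    (List.replicate k true ++ false :: unaryBlocks (((List.range K).map s).drop (i + 1)))
  rwa [length_take_range_map hi, ← storeTape_update hi, ← List.cons_append, ← List.replicate_succ,
    ← hs, ← storeTape_eq hi] at dec

theorem reachesIn_storeCfg_jump (h : HasRowsAt rows o [jumpRow q]) (K : ℕ) (s : ℕ → ℕ) :
    ReachesIn (machine rows) (storeCfg K o s) (storeCfg K q s) 1 :=
  .step (step_stay (h 0 _ rfl) fun _ => rfl) (.refl _ 0)

theorem reachesIn_storeCfg_dec_body {P : Prog} {k t z : ℕ}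
    (h : HasRowsAt rows o (decRows o i z ++ P.compile (o + (i + 8)) ++ [jumpRow q]))
    (hi : i < K) (hs : s i = k + 1)
    (body : HasRowsAt rows (o + (i + 8)) (P.compile (o + (i + 8))) →
      ReachesIn (machine rows) (storeCfg K (o + (i + 8)) (Function.update s i k))
        (storeCfg K (o + (i + 8) + P.size) s') t) :
    ReachesIn (machine rows) (storeCfg K o s) (storeCfg K q s')
      (5 * (storeTape K s).length + 4 + t + 1) := by
  simp only [hasRowsAt_append, List.length_append, length_decRows, Prog.length_compile,
    ← add_assoc o] at h
  obtain ⟨⟨hdec, hbody⟩, hjump⟩ := h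
  exact ((reachesIn_storeCfg_dec_pos hdec hi hs).trans (body hbody)).trans
    (reachesIn_storeCfg_jump hjump K s')

end Store

namespace Exec

variable {P : Prog} {s s' : ℕ → ℕ} {t K : ℕ}

theorem length_storeTape_le (h : Exec P s s' t) (hK : P.width ≤ K) :
    (storeTape K s').length ≤ (storeTape K s).length + t := by
  induction h with
  | skip s => rfl
  | inc i s =>
    have := length_storeTape_update hK s (s i + 1)
    omega
  | seq _ _ ih ih' =>
    obtain ⟨hP, hQ⟩ := max_le_iff.1 hK
    have := ih hP
    have := ih' hQ
    omega
  | ite_zero _ _ ih =>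
    obtain ⟨-, hPQ⟩ := max_le_iff.1 hK
    have := ih (max_le_iff.1 hPQ).2
    omega
  | @ite_pos i P Q s s' t k hs _ ih =>
    obtain ⟨hi, hPQ⟩ := max_le_iff.1 hK
    have := ih (max_le_iff.1 hPQ).1
    have := length_storeTape_update hi s k
    omega
  | loop_zero _ => omega
  | @loop_pos i P s s' s'' t t' k hs _ _ ih ih' =>
    obtain ⟨hi, hP⟩ := max_le_iff.1 hK
    have := ih hP
    have := ih' hK
    have := length_storeTape_update hi s k
    omega
  | mono _ _ ih =>
    have := ih hK
    omega

theorem reachesIn {rows : List Row} {o N : ℕ} (h : Exec P s s' t) (hK : P.width ≤ K)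
    (hP : HasRowsAt rows o (P.compile o)) (hN : (storeTape K s).length + t ≤ N) :
    ReachesIn (machine rows) (storeCfg K o s) (storeCfg K (o + P.size) s')
      (t * (5 * N + 5)) := by
  induction h generalizing o with
  | skip s => exact .refl _ _
  | inc i s => exact (reachesIn_storeCfg_inc hP hK s).mono (by omega)
  | seq h _ ih ih' =>
    obtain ⟨hwP, hwQ⟩ := max_le_iff.1 hK
    rw [Prog.compile, hasRowsAt_append, Prog.length_compile] at hP
    have := h.length_storeTape_le hwP
    have second := ih' hwQ hP.2 (by omega)
    rw [add_assoc] at second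
    exact ((ih hwP hP.1 (by omega)).trans second).mono (by linarith)
  | ite_zero hs _ ih =>
    obtain ⟨hi, hPQ⟩ := max_le_iff.1 hK
    simp only [Prog.compile, hasRowsAt_append, List.length_append, length_decRows,
      Prog.length_compile, List.length_singleton] at hP
    have body := ih (max_le_iff.1 hPQ).2 hP.2 (by omega)
    rw [add_assoc o] at body
    exact ((reachesIn_storeCfg_dec_zero hP.1.1.1 hi hs).trans body).mono (by linarith)
  | @ite_pos i P Q s s' t k hs _ ih =>
    obtain ⟨hi, hPQ⟩ := max_le_iff.1 hK
    rw [Prog.compile, hasRowsAt_append] at hP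
    have := length_storeTape_update hi s k
    exact (reachesIn_storeCfg_dec_body hP.1 hi hs fun hbody =>
      ih (max_le_iff.1 hPQ).1 hbody (by omega)).mono (by linarith)
  | loop_zero hs =>
    obtain ⟨hi, -⟩ := max_le_iff.1 hK
    rw [Prog.compile, hasRowsAt_append, hasRowsAt_append] at hP
    exact (reachesIn_storeCfg_dec_zero hP.1.1 hi hs).mono (by omega)
  | @loop_pos i P s s' s'' t t' k hs h _ ih ih' =>
    obtain ⟨hi, hwP⟩ := max_le_iff.1 hK
    have := length_storeTape_update hi s k
    have := h.length_storeTape_le hwP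
    have iteration := reachesIn_storeCfg_dec_body hP hi hs fun hbody => ih hwP hbody (by omega)
    exact (iteration.trans (ih' hK hP (by omega))).mono (by linarith)
  | mono _ ht ih => exact (ih hK hP (by omega)).mono (by gcongr)

end Exec

/-- Rows that append `K` separators to the tape. -/
def separatorRows (K : ℕ) : List Row :=
  (List.range K).map fun k a => if a = none then (k + 1, some false, .R) else (k, a, .R)

/-- Rows that extend an input in unary notation to the counters below `K`. -/
def preludeRows (K : ℕ) : List Row :=
  separatorRows K ++ [fun a => (K + 1, a, .L), homeRow (K + 1) (K + 2)]

/-- Rows that erase the separators at the end of the tape. -/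
def finaleRows (q : ℕ) : List Row :=
  [fun a => if a = none then (q + 1, none, .L) else (q, a, .R),
    fun a => if a = none then (q + 2, none, .R) else
      (q + 1, if a = some true then a else none, .L)]

theorem length_separatorRows (K : ℕ) : (separatorRows K).length = K := by simp [separatorRows]

theorem length_preludeRows (K : ℕ) : (preludeRows K).length = K + 2 := by
  simp [preludeRows, length_separatorRows]

section InputOutput

variable {rows : List Row} {q K : ℕ}

theorem reachesIn_separators (h : HasRowsAt rows 0 (separatorRows (K + 1))) (n : ℕ) :
    ReachesIn (machine rows) (initCfg (unary n))
      (zipCfg (K + 1) (List.replicate (K + 1) false ++ List.replicate n true) [])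
      (n + (K + 1)) := by
  have hrow (k : ℕ) (hk : k < K + 1) : rows[k]? = some fun a =>
      if a = none then (k + 1, some false, .R) else (k, a, .R) := by
    have := h k _ (by rw [separatorRows, List.getElem?_map, List.getElem?_range hk]; rfl)
    rwa [zero_add] at this
  have input := reachesIn_right (x := unary n) (hrow 0 K.succ_pos) (fun a _ => rfl) [] []
  have separators (m : ℕ) (hm : m ≤ K + 1) (L : List Bool) : ReachesIn (machine rows)
      (zipCfg 0 L []) (zipCfg m (List.replicate m false ++ L) []) m := by
    induction m with
    | zero => exact .refl _ _
    | succ m ih =>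
      exact (ih (by omega)).trans (.step (step_right (hrow m (by omega)) rfl) (.refl _ 0))
  simp only [unary, List.append_nil, List.reverse_replicate, List.length_replicate] at input
  exact input.trans (separators (K + 1) le_rfl _)

theorem reachesIn_prelude (h : HasRowsAt rows 0 (preludeRows (K + 1))) (n : ℕ) :
    ReachesIn (machine rows) (initCfg (unary n))
      (storeCfg (K + 1) (K + 3) (Function.update 0 0 n)) (2 * (K + 1 + n) + 2) := by
  rw [preludeRows, hasRowsAt_append, length_separatorRows, zero_add] at h
  have turn := step_erase_left (a := none) (h.2 0 _ rfl) rfl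
    (L := List.replicate (K + 1) false ++ List.replicate n true)
  have home := reachesIn_homeRow (h.2 1 _ rfl) (k := K + 1 + n)
    (x := List.replicate n true ++ List.replicate (K + 1) false) (by simp; omega)
  simp only [List.reverse_append, List.reverse_replicate, List.length_append,
    List.length_replicate] at turn
  rw [storeCfg, storeTape_update_zero]
  exact ((reachesIn_separators h.1 n).trans (.step turn home)).mono (by omega)

theorem reachesIn_erase_separators (h : HasRowsAt rows q (finaleRows q)) (x : List Bool) (k : ℕ) :
    ReachesIn (machine rows) (backCfg (q + 1) (x.length + k) (x ++ List.replicate k false))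
      (backCfg (q + 1) x.length x) k := by
  induction k with
  | zero => simpa using ReachesIn.refl _ _
  | succ k ih =>
    have erase := step_erase_left (a := some false) (h 1 _ rfl) rfl
      (L := List.replicate k false ++ x.reverse)
    rw [Option.toList_some, ← backCfg_eq_zipCfg] at erase
    simp only [List.reverse_append, List.reverse_replicate, List.reverse_reverse,
      List.length_append, List.length_reverse, List.length_replicate, List.append_assoc,
      ← List.replicate_succ'] at erase
    rw [add_comm k] at erase
    exact .step erase ih

theorem reachesIn_finale (h : HasRowsAt rows q (finaleRows q)) (m k : ℕ) :
    ReachesIn (machine rows) (zipCfg q [] (List.replicate m true ++ List.replicate k false))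
      (zipCfg (q + 2) [] (unary m)) (2 * (m + k) + 2) := by
  have right := reachesIn_right (x := List.replicate m true ++ List.replicate k false)
    (h 0 _ rfl) (fun a _ => rfl) [] []
  have turn := step_erase_left (a := none) (h 0 _ rfl) rfl
    (L := List.replicate k false ++ List.replicate m true)
  have erase := reachesIn_erase_separators h (List.replicate m true) k
  have home := reachesIn_home (h 1 _ rfl) (q' := q + 2) rfl (x := List.replicate m true)
    (fun a ha => by rw [List.eq_of_mem_replicate ha]; rfl) le_rfl
  simp only [List.append_nil, List.reverse_append, List.reverse_replicate, List.length_append,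
    List.length_replicate] at right turn erase home
  rw [add_comm k m] at turn
  exact (right.trans (.step turn (erase.trans home))).mono (by omega)

end InputOutput

namespace Prog

/-- The rows of a machine that computes in unary notation the function computed by a program in
counter `0`. -/
def rows (P : Prog) : List Row :=
  preludeRows (P.width + 1) ++ P.compile (P.width + 3) ++ finaleRows (P.width + 3 + P.size)

theorem length_rows (P : Prog) : P.rows.length = P.width + 3 + P.size + 2 := by
  rw [rows, List.length_append, List.length_append, length_preludeRows, length_compile]
  rfl

end Prog

namespace Exec

variable {P : Prog} {n m t : ℕ}

theorem reachesIn_rows (h : Exec P (Function.update 0 0 n) (Function.update 0 0 m) t) :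
    ReachesIn (machine P.rows) (initCfg (unary n)) (zipCfg (machine P.rows).accept [] (unary m))
      ((t + 1) * (5 * (P.width + 1 + n + t) + 5)) := by
  have hrows : HasRowsAt P.rows 0 P.rows := fun k r hk => by rwa [zero_add]
  nth_rw 2 [Prog.rows] at hrows
  simp only [hasRowsAt_append, List.length_append, length_preludeRows, Prog.length_compile,
    zero_add] at hrows
  obtain ⟨⟨hprelude, hcompile⟩, hfinale⟩ := hrows
  have length_eq (v : ℕ) :
      (storeTape (P.width + 1) (Function.update 0 0 v)).length = P.width + 1 + v := by
    rw [storeTape_update_zero, List.length_append, List.length_replicate, List.length_replicate,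
      add_comm]
  have length_le := h.length_storeTape_le P.width.le_succ
  rw [length_eq, length_eq] at length_le
  have run := h.reachesIn P.width.le_succ hcompile (Nat.add_le_add_right (length_eq n).le t)
  have finale := reachesIn_finale hfinale m (P.width + 1)
  rw [← storeTape_update_zero] at finale
  rw [show (machine P.rows).accept = P.width + 3 + P.size + 2 from P.length_rows]
  exact (((reachesIn_prelude hprelude n).trans run).trans finale).mono (by linarith)

theorem exists_computesIn (h : Exec P (Function.update 0 0 n) (Function.update 0 0 m) t) :
    ∃ t' ≤ (t + 1) * (5 * (P.width + 1 + n + t) + 5),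
      (machine P.rows).ComputesIn (unary n) (unary m) t' := by
  obtain ⟨t', ht', f, hinit, hf, hlast⟩ := h.reachesIn_rows.exists_runFrom
  exact ⟨t', ht', f, hinit, hf, by rw [hlast]; exact ⟨rfl, rfl, rfl⟩⟩

end Exec

/-! ### Polynomial-time computability -/

theorem exists_eval_le_mul_pow (p : Polynomial ℕ) : ∃ c : ℕ, ∀ n, p.eval n ≤ c * (n + 1) ^ c := by
  induction p using Polynomial.induction_on' with
  | add p q hp hq =>
    obtain ⟨c, hc⟩ := hp
    obtain ⟨d, hd⟩ := hq
    refine ⟨c + d, fun n => ?_⟩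
    rw [Polynomial.eval_add, add_mul]
    exact add_le_add
      ((hc n).trans (Nat.mul_le_mul_left c (Nat.pow_le_pow_right n.succ_pos (by omega))))
      ((hd n).trans (Nat.mul_le_mul_left d (Nat.pow_le_pow_right n.succ_pos (by omega))))
  | monomial k a =>
    refine ⟨a + k, fun n => ?_⟩
    rw [Polynomial.eval_monomial]
    gcongr <;> omega

namespace ArithFormula

theorem exists_polynomial_time_machine_stage {φ : ArithFormula}
    (hφ : ∀ n, ∃ W : ℕ, φ.Realize W fun _ => n) :
    ∃ M : NTM, M.Deterministic ∧ ∃ c : ℕ, ∀ n, ∃ t ≤ c * (φ.stage n + 1) ^ c,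
      M.ComputesIn (unary n) (unary (φ.stage n)) t := by
  obtain ⟨c, hc⟩ := exists_eval_le_mul_pow ((φ.stageTime + 1) *
    (5 * (Polynomial.C (φ.stageProg.width + 1) + Polynomial.X + φ.stageTime) + 5))
  refine ⟨machine φ.stageProg.rows, machine_deterministic _, c, fun n => ?_⟩
  obtain ⟨t, ht, hcomp⟩ := (exec_stageProg (hφ n)).exists_computesIn
  have hn : n ≤ φ.stage n := (lt_stage φ n).le
  refine ⟨t, (ht.trans ?_).trans (hc (φ.stage n)), hcomp⟩
  simp only [Polynomial.eval_mul, Polynomial.eval_add, Polynomial.eval_one, Polynomial.eval_C,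
    Polynomial.eval_X, Polynomial.eval_ofNat]
  gcongr

end ArithFormula

/-- **Lemma 6.1**: every computable `f` is dominated by an increasing `h`
    such that (i) `h(n) ≥ f(n²)`; (ii) `1^n ↦ 1^{h(n)}` is computable in time
    `h(n)^{O(1)}`; (iii) some sentence `φ_h` holds in `S(x)` iff `x = 1^{h(n)}`
    for some `n`; (iv) some formula defines the element `n` in `S(1^{h(n)})`
    for every `n ≥ 2`. -/
theorem dominating_ac0_invertible_function (f : ℕ → ℕ) (hf : Computable f) :
    ∃ h : ℕ → ℕ, StrictMono h ∧
      (∀ n : ℕ, f (n ^ 2) ≤ h n) ∧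
      (∃ M : NTM, M.Deterministic ∧ ∃ c : ℕ,
        ∀ n : ℕ, ∃ t ≤ c * (h n + 1) ^ c, M.ComputesIn (unary n) (unary (h n)) t) ∧
      (∃ φh : LOne.Sentence,
        ∀ x : Str, 2 ≤ x.length → (strSat x φh ↔ ∃ n : ℕ, x = unary (h n))) ∧
      (∃ ψ : LOne.Formula (Fin 1),
        ∀ n : ℕ, 2 ≤ n →
          n < strLen (unary (h n)) ∧
          ∀ a : Fin (strLen (unary (h n))),
            ((letI := strStructure (unary (h n)); ψ.Realize (fun _ : Fin 1 => a)) ↔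
              (a : ℕ) = n)) := by
  have hf2 : Computable fun n => f (n ^ 2) := by
    simp only [pow_two]
    exact hf.comp (Primrec.nat_mul.comp .id .id).to_comp
  obtain ⟨φ, hφ, hlt, hanti⟩ := exists_dominating_formula hf2
  have hmono : StrictMono φ.stage := ArithFormula.stage_strictMono hφ hanti
  have hdef := StrDefinable.strLen_eq_stage hφ
  have h2 := φ.two_le_stage
  refine ⟨φ.stage, hmono, fun n => ?_, ArithFormula.exists_polynomial_time_machine_stage hφ,
    exists_sentence_iff_eq_unary hdef φ.lt_stage h2, ?_⟩
  · exact ((hlt n _ (φ.isLeast_leastBound (hφ n)).1).trans (φ.leastBound_lt_stage n)).le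
  · obtain ⟨ψ, hψ⟩ := exists_formula_iff_eq hdef hmono.injective h2
    exact ⟨ψ, fun n _ => ⟨(φ.lt_stage n).trans_eq (strLen_unary (h2 n)).symm, hψ n⟩⟩

end PFW
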